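/- arXiv:2312.01395 — 3 statements merged into one kernel-verified Lean document; each statement's English description precedes it below -/
import Mathlib

section
/- (Existence of a transition point.) Let μ be a signed Borel measure on (0,∞) with density ρ with respect to Lebesgue measure such that: ρ < 0 on (0,r₀) and ρ ≥ 0, not identically zero, on (r₀,∞) for some r₀ > 0; the function f(r) := ∫₀^∞ e^{−r²s} ρ(s) ds is defined for all r > 0 and satisfies |f(r)| = O(r^{−2−δ}) as r → ∞ for some δ > 0; and for every A > 0 the function s ↦ H(As)·ρ(s) is Lebesgue-integrable on (0,∞). Define E₂(A) := (1/2) ∫₀^∞ H(As) ρ(s) ds. Then E₂ takes both strictly positive and strictly negative values on (0,∞); in particular, by continuity there exists a transition point A* > 0 with E₂(A*) = 0. -/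
open MeasureTheory

/-- The Jacobi theta function `θ₃(q) = Σ_{j ∈ ℤ} q^(j²)`. -/
noncomputable def theta3 (q : ℝ) : ℝ := ∑' j : ℤ, q ^ (j.natAbs ^ 2)

/-- `Θ(t) := θ₃(e^{−t})`. -/
noncomputable def Θ (t : ℝ) : ℝ := theta3 (Real.exp (-t))

/-- `H(t) := t·Θ(t)·Θ'(t) + t²·Θ(t)·Θ''(t) − t²·(Θ'(t))²`. -/
noncomputable def Hfun (t : ℝ) : ℝ :=
  t * Θ t * deriv Θ t + t ^ 2 * Θ t * iteratedDeriv 2 Θ t - t ^ 2 * (deriv Θ t) ^ 2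

/-!
With `D = t d/dt` one has `H = Θ² · D² log Θ`. Jacobi's identity `Θ(t) = √(π/t) Θ(π²/t)` changes
`log Θ` only by a term linear in `log t`, so `H(t) = (π/t) H(π²/t)`. Together with elementary
estimates for `t ≥ 3` this gives `e^{-(t + π²/t)} ≤ H(t) ≤ M e^{-c(t + π²/t)}` for each `c < 1`.

Hence, as `A → ∞`, the kernel `H(As)` on `s ≥ r` is exponentially small compared with its values
on `s < s' < r`, so the sign of `∫ H(As) ρ(s) ds` for large `A` is that of `ρ` near `0`. Inverting
`s` exchanges `A` and `π²/A`, so the sign for small `A` is that of `ρ` near `∞`.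
-/

section

open Real Set Filter Topology

/-! ### Theta moments -/

/-- The moments `∑ j^{2k} e^{-t j²}` of the theta series. They are, up to sign, the derivatives
of `Θ = thetaMoment 0`. -/
noncomputable def thetaMoment (k : ℕ) (t : ℝ) : ℝ :=
  ∑' j : ℤ, ((j : ℝ) ^ 2) ^ k * exp (-t * (j : ℝ) ^ 2)

lemma summable_thetaMoment (k : ℕ) {t : ℝ} (ht : 0 < t) :
    Summable (fun j : ℤ ↦ ((j : ℝ) ^ 2) ^ k * exp (-t * (j : ℝ) ^ 2)) := by
  refine (summable_pow_mul_jacobiTheta₂_term_bound 0 (div_pos ht pi_pos) (2 * k)).congr fun j ↦ ?_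
  have hsq : ((|j| : ℤ) : ℝ) ^ 2 = (j : ℝ) ^ 2 := by push_cast; exact sq_abs _
  rw [pow_mul, hsq]
  congr 2
  field_simp
  ring

lemma Theta_eq_thetaMoment_zero : Θ = thetaMoment 0 := by
  funext t
  refine tsum_congr fun j ↦ ?_
  have hsq : ((j.natAbs ^ 2 : ℕ) : ℝ) = (j : ℝ) ^ 2 := by
    rw [Nat.cast_pow, Nat.cast_natAbs, Int.cast_abs, sq_abs]
  rw [← exp_nat_mul, hsq, pow_zero, one_mul, mul_comm]

lemma hasDerivAt_thetaMoment (k : ℕ) {t : ℝ} (ht : 0 < t) :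
    HasDerivAt (thetaMoment k) (-thetaMoment (k + 1) t) t := by
  have hmem : t ∈ Ioi (t / 2) := half_lt_self ht
  have hterm (j : ℤ) (y : ℝ) : HasDerivAt (fun y ↦ ((j : ℝ) ^ 2) ^ k * exp (-y * (j : ℝ) ^ 2))
      (-(((j : ℝ) ^ 2) ^ (k + 1) * exp (-y * (j : ℝ) ^ 2))) y := by
    have hexp := ((hasDerivAt_neg y).mul_const ((j : ℝ) ^ 2)).exp
    exact (hexp.const_mul (((j : ℝ) ^ 2) ^ k)).congr_deriv (by ring)
  have hbound (j : ℤ) (y : ℝ) (hy : y ∈ Ioi (t / 2)) :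
      ‖-(((j : ℝ) ^ 2) ^ (k + 1) * exp (-y * (j : ℝ) ^ 2))‖ ≤
        ((j : ℝ) ^ 2) ^ (k + 1) * exp (-(t / 2) * (j : ℝ) ^ 2) := by
    rw [norm_neg, norm_of_nonneg (by positivity)]
    have : t / 2 ≤ y := le_of_lt hy
    gcongr
  have hderiv :=
    hasDerivAt_tsum_of_isPreconnected (summable_thetaMoment (k + 1) (half_pos ht)) isOpen_Ioi
      isPreconnected_Ioi (fun j y _ ↦ hterm j y) hbound hmem (summable_thetaMoment k ht) hmem
  rwa [tsum_neg] at hderiv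

lemma continuousAt_thetaMoment (k : ℕ) {t : ℝ} (ht : 0 < t) : ContinuousAt (thetaMoment k) t :=
  (hasDerivAt_thetaMoment k ht).continuousAt

lemma deriv_Theta {t : ℝ} (ht : 0 < t) : deriv Θ t = -thetaMoment 1 t := by
  rw [Theta_eq_thetaMoment_zero]
  exact (hasDerivAt_thetaMoment 0 ht).deriv

lemma iteratedDeriv_two_Theta {t : ℝ} (ht : 0 < t) : iteratedDeriv 2 Θ t = thetaMoment 2 t := by
  have hderiv : deriv Θ =ᶠ[𝓝 t] fun y ↦ -thetaMoment 1 y := by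
    filter_upwards [Ioi_mem_nhds ht] with y hy using deriv_Theta hy
  rw [iteratedDeriv_succ, iteratedDeriv_one, hderiv.deriv_eq]
  exact (hasDerivAt_thetaMoment 1 ht).neg.deriv.trans (neg_neg _)

lemma Hfun_eq_thetaMoment {t : ℝ} (ht : 0 < t) :
    Hfun t = -(t * thetaMoment 0 t * thetaMoment 1 t) +
      t ^ 2 * (thetaMoment 0 t * thetaMoment 2 t - thetaMoment 1 t ^ 2) := by
  rw [Hfun, deriv_Theta ht, iteratedDeriv_two_Theta ht, Theta_eq_thetaMoment_zero]
  ring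

lemma continuousOn_Hfun : ContinuousOn Hfun (Ioi 0) := by
  have hcont (k : ℕ) : ContinuousOn (thetaMoment k) (Ioi 0) :=
    fun t ht ↦ (continuousAt_thetaMoment k ht).continuousWithinAt
  refine ContinuousOn.congr ?_ fun t ht ↦ Hfun_eq_thetaMoment ht
  have := hcont 0
  have := hcont 1
  have := hcont 2
  fun_prop

lemma thetaMoment_nonneg (k : ℕ) (t : ℝ) : 0 ≤ thetaMoment k t :=
  tsum_nonneg fun _ ↦ by positivity

lemma thetaMoment_zero_pos {t : ℝ} (ht : 0 < t) : 0 < thetaMoment 0 t :=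
  (summable_thetaMoment 0 ht).tsum_pos (fun _ ↦ by positivity) 0 (by positivity)

/-! ### The functional equation of `H` -/

lemma Theta_eq_sqrt_mul {t : ℝ} (ht : 0 < t) : Θ t = √(π / t) * Θ (π ^ 2 / t) := by
  have hsqrt : √(π / t) = 1 / (t / π) ^ (1 / 2 : ℝ) := by
    rw [← sqrt_eq_rpow, one_div, ← sqrt_inv, inv_div]
  have hleft : -π * (t / π) = -t := by field_simp
  have hright : -π / (t / π) = -(π ^ 2 / t) := by field_simp
  simpa only [Theta_eq_thetaMoment_zero, thetaMoment, pow_zero, one_mul, hsqrt, hleft, hright]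
    using tsum_exp_neg_mul_int_sq (div_pos ht pi_pos)

/-- `log Θ` in the variable `x = log t`, in which `t d/dt` becomes `d/dx` and `t ↦ π²/t` becomes
a reflection. -/
noncomputable def logTheta (x : ℝ) : ℝ := log (Θ (exp x))

lemma hasDerivAt_logTheta (x : ℝ) :
    HasDerivAt logTheta (-(exp x * thetaMoment 1 (exp x) / thetaMoment 0 (exp x))) x := by
  have hcomp := (hasDerivAt_thetaMoment 0 (exp_pos x)).comp x (hasDerivAt_exp x)
  unfold logTheta
  rw [Theta_eq_thetaMoment_zero]
  exact (hcomp.log (thetaMoment_zero_pos (exp_pos x)).ne').congr_deriv (by ring_nf; rfl)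

lemma Hfun_exp (x : ℝ) : Hfun (exp x) = Θ (exp x) ^ 2 * deriv (deriv logTheta) x := by
  have hderiv : deriv logTheta =
      fun x ↦ -(exp x * thetaMoment 1 (exp x) / thetaMoment 0 (exp x)) :=
    funext fun x ↦ (hasDerivAt_logTheta x).deriv
  have hpos := thetaMoment_zero_pos (exp_pos x)
  have hcomp (k : ℕ) := (hasDerivAt_thetaMoment k (exp_pos x)).comp x (hasDerivAt_exp x)
  have hsecond := (((hasDerivAt_exp x).mul (hcomp 1)).div (hcomp 0) hpos.ne').neg.deriv
  rw [hderiv, Hfun_eq_thetaMoment (exp_pos x), Theta_eq_thetaMoment_zero]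
  refine Eq.trans ?_ (congrArg (thetaMoment 0 (exp x) ^ 2 * ·) hsecond.symm)
  simp only [Function.comp_apply, Pi.mul_apply]
  field_simp
  ring

lemma exp_two_mul_log_pi_sub (x : ℝ) : exp (2 * log π - x) = π ^ 2 / exp x := by
  rw [exp_sub, two_mul, exp_add, exp_log pi_pos, sq]

lemma logTheta_eq_reflect (x : ℝ) :
    logTheta x = (log π - x) / 2 + logTheta (2 * log π - x) := by
  have hΘ : Θ (π ^ 2 / exp x) ≠ 0 := by
    rw [Theta_eq_thetaMoment_zero]
    exact (thetaMoment_zero_pos (by positivity)).ne'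
  rw [logTheta, logTheta, exp_two_mul_log_pi_sub, Theta_eq_sqrt_mul (exp_pos x),
    log_mul (by positivity) hΘ, log_sqrt (by positivity), log_div pi_ne_zero (exp_ne_zero x),
    log_exp]

lemma deriv_deriv_logTheta_reflect (x : ℝ) :
    deriv (deriv logTheta) x = deriv (deriv logTheta) (2 * log π - x) := by
  have hfirst : deriv logTheta = fun x ↦ -1 / 2 - deriv logTheta (2 * log π - x) := by
    funext x
    have hlin : HasDerivAt (fun x : ℝ ↦ (log π - x) / 2) (-1 / 2) x :=
      ((hasDerivAt_id x).const_sub _).div_const 2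
    have hreflect :=
      (hasDerivAt_logTheta _).differentiableAt.hasDerivAt.comp_const_sub (2 * log π) x
    have hsum := (hlin.add hreflect).congr_of_eventuallyEq
      (Eventually.of_forall logTheta_eq_reflect)
    rw [hsum.deriv]
    ring
  conv_lhs => rw [hfirst]
  rw [deriv_const_sub, deriv_comp_const_sub, neg_neg]

theorem Hfun_eq_pi_div_mul {t : ℝ} (ht : 0 < t) : Hfun t = π / t * Hfun (π ^ 2 / t) := by
  have hleft := Hfun_exp (log t)
  have hright := Hfun_exp (2 * log π - log t)
  rw [exp_log ht] at hleft
  rw [exp_two_mul_log_pi_sub, exp_log ht] at hright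
  rw [hleft, hright, deriv_deriv_logTheta_reflect, Theta_eq_sqrt_mul ht, mul_pow,
    sq_sqrt (by positivity), mul_assoc]

/-! ### Two-sided bounds on `H` -/

lemma jacobiTheta_I_mul (t : ℝ) :
    jacobiTheta (Complex.I * ((t / π : ℝ) : ℂ)) = (thetaMoment 0 t : ℂ) := by
  rw [jacobiTheta, thetaMoment, Complex.ofReal_tsum]
  refine tsum_congr fun j ↦ ?_
  have hpi : (π : ℂ) ≠ 0 := Complex.ofReal_ne_zero.2 pi_ne_zero
  push_cast
  rw [pow_zero, one_mul]
  congr 1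
  field_simp
  rw [Complex.I_sq]
  ring

lemma thetaMoment_zero_le_two {t : ℝ} (ht : 3 ≤ t) : thetaMoment 0 t ≤ 2 := by
  have him : (Complex.I * ((t / π : ℝ) : ℂ)).im = t / π := by simp
  have hexp : exp (-t) ≤ 1 / 4 := by
    rw [exp_neg, inv_le_comm₀ (exp_pos _) (by norm_num)]
    linarith [add_one_le_exp t]
  have hnorm := norm_jacobiTheta_sub_one_le (τ := Complex.I * ((t / π : ℝ) : ℂ))
    (by rw [him]; positivity)
  rw [jacobiTheta_I_mul, him, ← Complex.ofReal_one, ← Complex.ofReal_sub, Complex.norm_real,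
    norm_eq_abs, neg_mul, mul_div_cancel₀ t pi_ne_zero] at hnorm
  have hgeom : 2 / (1 - exp (-t)) * exp (-t) ≤ 1 := by
    rw [div_mul_eq_mul_div, div_le_one (by linarith)]
    linarith
  linarith [le_of_abs_le (hnorm.trans hgeom)]

/-- Cauchy–Schwarz for the terms `j ≠ 0`; leaving out `j = 0` improves `thetaMoment 0 t` to
`thetaMoment 0 t - 1`. -/
lemma sq_thetaMoment_one_le {t : ℝ} (ht : 0 < t) :
    thetaMoment 1 t ^ 2 ≤ (thetaMoment 0 t - 1) * thetaMoment 2 t := by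
  have hquad (x : ℝ) :
      0 ≤ (thetaMoment 0 t - 1) * (x * x) + -2 * thetaMoment 1 t * x + thetaMoment 2 t := by
    have hsum (k : ℕ) := (summable_thetaMoment k ht).hasSum
    have hdelta : HasSum (fun j : ℤ ↦ if j = 0 then (1 : ℝ) else 0) 1 := hasSum_ite_eq 0 1
    refine (((((hsum 0).sub hdelta).mul_right (x * x)).add
      (((hsum 1).mul_left (-2)).mul_right x)).add (hsum 2)).nonneg fun j ↦ ?_
    rcases eq_or_ne j 0 with rfl | hj
    · simp
    · have hsq : 0 ≤ (x - (j : ℝ) ^ 2) ^ 2 * exp (-t * (j : ℝ) ^ 2) := by positivity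
      simp only [hj, if_false]
      linarith
  have hdiscrim := discrim_le_zero hquad
  rw [discrim] at hdiscrim
  linarith

lemma one_le_intCast_sq {j : ℤ} (hj : j ≠ 0) : (1 : ℝ) ≤ (j : ℝ) ^ 2 := by
  exact_mod_cast Int.add_one_le_of_lt (sq_pos_of_ne_zero hj)

lemma thetaMoment_one_le_thetaMoment_two {t : ℝ} (ht : 0 < t) :
    thetaMoment 1 t ≤ thetaMoment 2 t := by
  refine (summable_thetaMoment 1 ht).tsum_le_tsum (fun j ↦ ?_) (summable_thetaMoment 2 ht)
  rcases eq_or_ne j 0 with rfl | hj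
  · simp
  · have := one_le_intCast_sq hj
    gcongr
    norm_num

lemma exp_neg_le_thetaMoment {t : ℝ} (k : ℕ) (ht : 0 < t) : exp (-t) ≤ thetaMoment k t := by
  simpa [thetaMoment] using (summable_thetaMoment k ht).le_tsum 1 fun j _ ↦ by positivity

lemma thetaMoment_succ_le_exp_neg (k : ℕ) {t : ℝ} (ht : 1 ≤ t) :
    thetaMoment (k + 1) t ≤ exp 1 * thetaMoment (k + 1) 1 * exp (-t) := by
  have hfactor : exp 1 * thetaMoment (k + 1) 1 * exp (-t) =
      exp (1 - t) * thetaMoment (k + 1) 1 := by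
    rw [sub_eq_add_neg, exp_add]
    ring
  rw [hfactor, thetaMoment, thetaMoment, ← tsum_mul_left]
  refine (summable_thetaMoment _ (by linarith)).tsum_le_tsum (fun j ↦ ?_)
    ((summable_thetaMoment _ one_pos).mul_left _)
  rcases eq_or_ne j 0 with rfl | hj
  · simp
  · have := one_le_intCast_sq hj
    rw [mul_left_comm, ← exp_add]
    gcongr
    nlinarith

lemma exp_neg_le_Hfun {t : ℝ} (ht : 3 ≤ t) : exp (-t) ≤ Hfun t := by
  have ht0 : 0 < t := by linarith
  have hvar : thetaMoment 1 t ≤ thetaMoment 0 t * thetaMoment 2 t - thetaMoment 1 t ^ 2 := by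
    linarith [sq_thetaMoment_one_le ht0, thetaMoment_one_le_thetaMoment_two ht0]
  calc exp (-t) ≤ 1 * thetaMoment 1 t := by
        rw [one_mul]
        exact exp_neg_le_thetaMoment 1 ht0
    _ ≤ (t * (t - 2)) * thetaMoment 1 t := by
        gcongr
        · exact thetaMoment_nonneg 1 t
        · nlinarith
    _ = -(t * 2 * thetaMoment 1 t) + t ^ 2 * thetaMoment 1 t := by ring
    _ ≤ -(t * thetaMoment 0 t * thetaMoment 1 t) +
          t ^ 2 * (thetaMoment 0 t * thetaMoment 2 t - thetaMoment 1 t ^ 2) := by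
        gcongr
        · exact thetaMoment_nonneg 1 t
        · exact thetaMoment_zero_le_two ht
    _ = Hfun t := (Hfun_eq_thetaMoment ht0).symm

lemma Hfun_le_sq_mul_exp_neg {t : ℝ} (ht : 3 ≤ t) :
    Hfun t ≤ 2 * (exp 1 * thetaMoment 2 1) * t ^ 2 * exp (-t) := by
  have ht0 : 0 < t := by linarith
  have hcross : 0 ≤ t * thetaMoment 0 t * thetaMoment 1 t :=
    mul_nonneg (mul_nonneg ht0.le (thetaMoment_nonneg 0 t)) (thetaMoment_nonneg 1 t)
  calc Hfun t ≤ t ^ 2 * (thetaMoment 0 t * thetaMoment 2 t) := by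
        rw [Hfun_eq_thetaMoment ht0]
        nlinarith [sq_nonneg (t * thetaMoment 1 t)]
    _ ≤ t ^ 2 * (2 * (exp 1 * thetaMoment 2 1 * exp (-t))) := by
        gcongr
        · exact thetaMoment_nonneg 2 t
        · exact thetaMoment_zero_le_two ht
        · exact thetaMoment_succ_le_exp_neg 1 (by linarith)
    _ = _ := by ring

lemma exists_mul_Hfun_le_exp {c : ℝ} (hc : c < 1) :
    ∃ M, 0 < M ∧ ∀ t, 3 ≤ t → t * Hfun t ≤ M * exp (-(c * t)) := by
  set L := 2 * (exp 1 * thetaMoment 2 1)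
  have hL : 0 < L := by
    have := (exp_pos (-1)).trans_le (exp_neg_le_thetaMoment 2 one_pos)
    positivity
  have : 0 < 1 - c := sub_pos.2 hc
  refine ⟨L * (6 / (1 - c) ^ 3), by positivity, fun t ht ↦ ?_⟩
  have hcube : t ^ 3 ≤ 6 / (1 - c) ^ 3 * exp ((1 - c) * t) := by
    have hpow := pow_div_factorial_le_exp (x := (1 - c) * t) (by positivity) 3
    rw [div_mul_eq_mul_div, le_div_iff₀ (by positivity)]
    norm_num [Nat.factorial, mul_pow] at hpow
    linarith
  calc t * Hfun t ≤ t * (L * t ^ 2 * exp (-t)) := by gcongr; exact Hfun_le_sq_mul_exp_neg ht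
    _ = L * t ^ 3 * exp (-t) := by ring
    _ ≤ L * (6 / (1 - c) ^ 3 * exp ((1 - c) * t)) * exp (-t) := by gcongr
    _ = L * (6 / (1 - c) ^ 3) * (exp ((1 - c) * t) * exp (-t)) := by ring
    _ = L * (6 / (1 - c) ^ 3) * exp (-(c * t)) := by rw [← exp_add]; ring_nf

lemma three_le_pi_sq_div {t : ℝ} (ht : 0 < t) (ht3 : t ≤ 3) : 3 ≤ π ^ 2 / t := by
  rw [le_div_iff₀ ht]
  nlinarith [pi_gt_three]

theorem exp_neg_add_le_Hfun {t : ℝ} (ht : 0 < t) : exp (-(t + π ^ 2 / t)) ≤ Hfun t := by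
  have hdual : 0 < π ^ 2 / t := by positivity
  rcases le_total 3 t with h3 | h3
  · exact (exp_le_exp.2 (by linarith)).trans (exp_neg_le_Hfun h3)
  · have hratio : 1 ≤ π / t := by
      rw [one_le_div ht]
      linarith [pi_gt_three]
    calc exp (-(t + π ^ 2 / t)) ≤ 1 * exp (-(π ^ 2 / t)) := by
          rw [one_mul]
          gcongr
          linarith
      _ ≤ π / t * Hfun (π ^ 2 / t) := by
          gcongr
          exact exp_neg_le_Hfun (three_le_pi_sq_div ht h3)
      _ = Hfun t := (Hfun_eq_pi_div_mul ht).symm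

theorem Hfun_pos {t : ℝ} (ht : 0 < t) : 0 < Hfun t :=
  (exp_pos _).trans_le (exp_neg_add_le_Hfun ht)

theorem exists_Hfun_le_exp {c : ℝ} (hc0 : 0 ≤ c) (hc1 : c < 1) :
    ∃ M, 0 < M ∧ ∀ t, 0 < t → Hfun t ≤ M * exp (-(c * (t + π ^ 2 / t))) := by
  obtain ⟨M, hM, hbound⟩ := exists_mul_Hfun_le_exp hc1
  refine ⟨M * exp (c * 4), by positivity, fun t ht ↦ ?_⟩
  have hdual : 0 < π ^ 2 / t := by positivity
  have habsorb {u v : ℝ} (hv : v ≤ 4) :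
      M * exp (-(c * u)) ≤ M * exp (c * 4) * exp (-(c * (u + v))) := by
    rw [mul_assoc, ← exp_add]
    gcongr
    nlinarith
  rcases le_total 3 t with h3 | h3
  · have hle : π ^ 2 / t ≤ 4 := by
      rw [div_le_iff₀ ht]
      nlinarith [pi_lt_d2, pi_gt_three]
    calc Hfun t ≤ t * Hfun t := le_mul_of_one_le_left (Hfun_pos ht).le (by linarith)
      _ ≤ M * exp (-(c * t)) := hbound t h3
      _ ≤ _ := habsorb hle
  · have hfactor : π / t ≤ π ^ 2 / t := by
      gcongr
      nlinarith [pi_gt_three]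
    calc Hfun t = π / t * Hfun (π ^ 2 / t) := Hfun_eq_pi_div_mul ht
      _ ≤ π ^ 2 / t * Hfun (π ^ 2 / t) := mul_le_mul_of_nonneg_right hfactor (Hfun_pos hdual).le
      _ ≤ M * exp (-(c * (π ^ 2 / t))) := hbound _ (three_le_pi_sq_div ht h3)
      _ ≤ _ := by
        rw [add_comm t]
        exact habsorb (by linarith)

/-! ### Comparing dilates of `H` -/

lemma exists_exp_mul_Hfun_le :
    ∃ κ, 0 < κ ∧ ∀ A s, 2 ≤ A → 0 < s → κ * exp (-(A * s)) * Hfun s ≤ Hfun (A * s) := by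
  obtain ⟨M, hM, hbound⟩ := exists_Hfun_le_exp (c := 1 / 2) (by norm_num) (by norm_num)
  refine ⟨M⁻¹, by positivity, fun A s hA hs ↦ ?_⟩
  have hdual : π ^ 2 / (A * s) ≤ 1 / 2 * (π ^ 2 / s) := by
    calc π ^ 2 / (A * s) ≤ π ^ 2 / (2 * s) := by gcongr
      _ = 1 / 2 * (π ^ 2 / s) := by ring
  calc M⁻¹ * exp (-(A * s)) * Hfun s
      ≤ M⁻¹ * exp (-(A * s)) * (M * exp (-(1 / 2 * (s + π ^ 2 / s)))) := by
        gcongr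
        exact hbound s hs
    _ = exp (-(A * s) + -(1 / 2 * (s + π ^ 2 / s))) := by rw [exp_add]; field_simp
    _ ≤ exp (-(A * s + π ^ 2 / (A * s))) := by
        gcongr
        linarith
    _ ≤ Hfun (A * s) := exp_neg_add_le_Hfun (by positivity)

lemma exists_Hfun_le_exp_mul {c r : ℝ} (hc0 : 0 < c) (hc1 : c < 1) (hr : 0 < r) :
    ∃ M, ∀ A s, c⁻¹ ≤ A → r ≤ s → Hfun (A * s) ≤ M * exp (-(A * (c * r))) * Hfun s := by
  obtain ⟨M, hM, hbound⟩ := exists_Hfun_le_exp hc0.le hc1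
  refine ⟨M * exp (r + π ^ 2 / r), fun A s hA hrs ↦ ?_⟩
  have hs : 0 < s := hr.trans_le hrs
  have hApos : 0 < A := (inv_pos.2 hc0).trans_le hA
  have hcA : 1 ≤ c * A := (inv_le_iff_one_le_mul₀' hc0).1 hA
  have hdual : π ^ 2 / s ≤ π ^ 2 / r := by gcongr
  have hdual' : 0 ≤ c * (π ^ 2 / (A * s)) := by positivity
  calc Hfun (A * s) ≤ M * exp (-(c * (A * s + π ^ 2 / (A * s)))) := hbound _ (by positivity)
    _ ≤ M * exp (r + π ^ 2 / r + -(A * (c * r)) + -(s + π ^ 2 / s)) := by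
        gcongr
        nlinarith
    _ = M * exp (r + π ^ 2 / r) * exp (-(A * (c * r))) * exp (-(s + π ^ 2 / s)) := by
        rw [exp_add, exp_add]
        ring
    _ ≤ _ := by
        gcongr
        exact exp_neg_add_le_Hfun hs

lemma exists_Hfun_le_add :
    ∃ M, ∀ t u, 0 < t → t / 2 ≤ u → u ≤ 2 * t →
      Hfun u ≤ M * (Hfun (t / 4) + Hfun (4 * t)) := by
  obtain ⟨M, hM, hbound⟩ := exists_Hfun_le_exp (c := 1 / 2) (by norm_num) (by norm_num)
  refine ⟨M * exp (4 * π ^ 2), fun t u ht htu hut ↦ ?_⟩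
  have hu : 0 < u := by linarith
  have hquarter := Hfun_pos (by positivity : 0 < t / 4)
  have hfour := Hfun_pos (by positivity : 0 < 4 * t)
  have hdual : π ^ 2 / (2 * t) ≤ π ^ 2 / u := by gcongr
  have hu' : Hfun u ≤ M * exp (-(t / 4 + π ^ 2 / (4 * t))) := by
    refine (hbound u hu).trans ?_
    have : π ^ 2 / (4 * t) = 1 / 2 * (π ^ 2 / (2 * t)) := by field_simp; norm_num
    gcongr
    linarith
  have hcompare {v : ℝ} (hv : 0 < v)
      (hle : v + π ^ 2 / v ≤ 4 * π ^ 2 + (t / 4 + π ^ 2 / (4 * t))) :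
      Hfun u ≤ M * exp (4 * π ^ 2) * Hfun v := by
    calc Hfun u ≤ M * exp (-(t / 4 + π ^ 2 / (4 * t))) := hu'
      _ ≤ M * exp (4 * π ^ 2 + -(v + π ^ 2 / v)) := by
          gcongr
          linarith
      _ = M * exp (4 * π ^ 2) * exp (-(v + π ^ 2 / v)) := by rw [exp_add, mul_assoc]
      _ ≤ _ := by
          gcongr
          exact exp_neg_add_le_Hfun hv
  rcases le_total 1 t with h1 | h1
  · have hle : π ^ 2 / (t / 4) ≤ 4 * π ^ 2 := by
      rw [div_le_iff₀ (by positivity)]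
      nlinarith [sq_nonneg π]
    have hnonneg : 0 ≤ π ^ 2 / (4 * t) := by positivity
    refine (hcompare (v := t / 4) (by positivity) (by linarith)).trans ?_
    gcongr
    linarith
  · refine (hcompare (v := 4 * t) (by positivity) (by nlinarith [pi_gt_three])).trans ?_
    gcongr
    linarith

/-! ### Integrals against dilates of `H` -/

lemma exists_setIntegral_Ioo_pos {ν : Measure ℝ} {g : ℝ → ℝ} {a b : ℝ}
    (hg : IntegrableOn g (Ioo a b) ν) (hpos : 0 < ∫ x in Ioo a b, g x ∂ν) :
    ∃ c < b, 0 < ∫ x in Ioo a c, g x ∂ν := by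
  have hcover : AECover (ν.restrict (Ioo a b)) (𝓝[<] b) (Ioo a) :=
    aecover_Ioo_of_Ioo tendsto_const_nhds (tendsto_id.mono_left nhdsWithin_le_nhds)
  have hlim := hcover.integral_tendsto_of_countably_generated hg
  obtain ⟨c, hc, hcb⟩ :=
    ((hlim.eventually_const_lt hpos).and self_mem_nhdsWithin).exists
  refine ⟨c, hcb, ?_⟩
  rwa [Measure.restrict_restrict measurableSet_Ioo,
    inter_eq_left.2 (Ioo_subset_Ioo_right (le_of_lt hcb))] at hc

lemma eventually_setIntegral_union_pos {X ι : Type*} [MeasurableSpace X] {ν : Measure X}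
    {l : Filter ι} {K : ι → X → ℝ} {k g : X → ℝ} {P N V : Set X} {a b : ι → ℝ}
    (hP : MeasurableSet P) (hN : MeasurableSet N) (hV : MeasurableSet V)
    (hPN : Disjoint P N) (hVP : V ⊆ P)
    (hk : IntegrableOn (fun x ↦ k x * g x) (P ∪ N) ν)
    (hK : ∀ᶠ i in l, IntegrableOn (fun x ↦ K i x * g x) (P ∪ N) ν)
    (hg : ∀ x ∈ P, 0 ≤ g x) (hkN : ∀ x ∈ N, 0 ≤ k x) (hKP : ∀ᶠ i in l, ∀ x ∈ P, 0 ≤ K i x)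
    (hKV : ∀ᶠ i in l, ∀ x ∈ V, a i * k x ≤ K i x)
    (hKN : ∀ᶠ i in l, ∀ x ∈ N, |K i x| ≤ b i * k x)
    (ha : ∀ i, 0 < a i) (hba : Tendsto (fun i ↦ b i / a i) l (𝓝 0))
    (hpos : 0 < ∫ x in V, k x * g x ∂ν) :
    ∀ᶠ i in l, 0 < ∫ x in P ∪ N, K i x * g x ∂ν := by
  have hsmall : ∀ᶠ i in l, b i / a i * ∫ x in N, |k x * g x| ∂ν < ∫ x in V, k x * g x ∂ν := by
    have hlim := hba.mul_const (∫ x in N, |k x * g x| ∂ν)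
    rw [zero_mul] at hlim
    exact hlim.eventually_lt_const hpos
  filter_upwards [hK, hKP, hKV, hKN, hsmall] with i hKi hKPi hKVi hKNi hi
  have hmain : a i * ∫ x in V, k x * g x ∂ν ≤ ∫ x in P, K i x * g x ∂ν := by
    have hVle : ∫ x in V, a i * (k x * g x) ∂ν ≤ ∫ x in V, K i x * g x ∂ν := by
      refine setIntegral_mono_on ((hk.mono_set ?_).const_mul _) (hKi.mono_set ?_) hV
        fun x hx ↦ ?_
      · exact hVP.trans subset_union_left
      · exact hVP.trans subset_union_left
      · rw [← mul_assoc]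
        exact mul_le_mul_of_nonneg_right (hKVi x hx) (hg x (hVP hx))
    rw [integral_const_mul] at hVle
    refine hVle.trans (setIntegral_mono_set (hKi.mono_set subset_union_left) ?_ hVP.eventuallyLE)
    filter_upwards [ae_restrict_mem hP] with x hx using mul_nonneg (hKPi x hx) (hg x hx)
  have herror : -(b i * ∫ x in N, |k x * g x| ∂ν) ≤ ∫ x in N, K i x * g x ∂ν := by
    rw [← integral_const_mul, ← integral_neg]
    refine setIntegral_mono_on ((hk.mono_set subset_union_right).abs.const_mul _).neg
      (hKi.mono_set subset_union_right) hN fun x hx ↦ neg_le_of_abs_le ?_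
    rw [abs_mul, abs_mul, abs_of_nonneg (hkN x hx), ← mul_assoc]
    exact mul_le_mul_of_nonneg_right (hKNi x hx) (abs_nonneg _)
  rw [div_mul_eq_mul_div, div_lt_iff₀ (ha i)] at hi
  rw [setIntegral_union hPN hN (hKi.mono_set subset_union_left)
    (hKi.mono_set subset_union_right)]
  linarith

variable {ν : Measure ℝ} {ρ : ℝ → ℝ} {r : ℝ}

lemma exists_setIntegral_Hfun_mul_pos (hρ : ∀ s ∈ Ioo 0 r, 0 ≤ ρ s)
    (hne : ν {s ∈ Ioo 0 r | ρ s ≠ 0} ≠ 0)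
    (hint : IntegrableOn (fun s ↦ Hfun s * ρ s) (Ioo 0 r) ν) :
    ∃ q < r, 0 < ∫ s in Ioo 0 q, Hfun s * ρ s ∂ν := by
  have hsupport : Function.support (fun s ↦ Hfun s * ρ s) ∩ Ioo 0 r = {s ∈ Ioo 0 r | ρ s ≠ 0} := by
    ext s
    simp only [Function.support_mul, mem_inter_iff, Function.mem_support, mem_sep_iff]
    exact ⟨fun h ↦ ⟨h.2, h.1.2⟩, fun h ↦ ⟨⟨(Hfun_pos h.1.1).ne', h.2⟩, h.1⟩⟩
  refine exists_setIntegral_Ioo_pos hint ?_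
  rw [setIntegral_pos_iff_support_of_nonneg_ae ?_ hint, hsupport]
  · exact pos_iff_ne_zero.2 hne
  · filter_upwards [ae_restrict_mem measurableSet_Ioo] with s hs
    exact mul_nonneg (Hfun_pos hs.1).le (hρ s hs)

lemma tendsto_mul_exp_div_mul_exp {p q : ℝ} (hqp : q < p) (M κ : ℝ) :
    Tendsto (fun A ↦ M * exp (-(A * p)) / (κ * exp (-(A * q)))) atTop (𝓝 0) := by
  have hratio (A : ℝ) :
      M * exp (-(A * p)) / (κ * exp (-(A * q))) = M / κ * exp (A * (q - p)) := by
    rw [mul_div_mul_comm, ← exp_sub]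
    ring_nf
  have hexp : Tendsto (fun A ↦ exp (A * (q - p))) atTop (𝓝 0) :=
    tendsto_exp_atBot.comp (tendsto_id.atTop_mul_const_of_neg (sub_neg.2 hqp))
  simpa only [hratio, mul_zero] using hexp.const_mul (M / κ)

theorem eventually_atTop_integral_Hfun_mul_pos (hr : 0 < r)
    (hρ : ∀ s ∈ Ioo 0 r, 0 ≤ ρ s) (hne : ν {s ∈ Ioo 0 r | ρ s ≠ 0} ≠ 0)
    (hint : ∀ A, 0 < A → IntegrableOn (fun s ↦ Hfun (A * s) * ρ s) (Ioi 0) ν) :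
    ∀ᶠ A in atTop, 0 < ∫ s in Ioi 0, Hfun (A * s) * ρ s ∂ν := by
  have hint1 : IntegrableOn (fun s ↦ Hfun s * ρ s) (Ioi 0) ν := by simpa using hint 1 one_pos
  obtain ⟨q, hqr, hq⟩ :=
    exists_setIntegral_Hfun_mul_pos hρ hne (hint1.mono_set Ioo_subset_Ioi_self)
  obtain ⟨c, hc, hc1⟩ := exists_between (max_lt ((div_lt_one hr).2 hqr) one_pos)
  obtain ⟨hqc, hc0⟩ := max_lt_iff.1 hc
  obtain ⟨κ, hκ, hlower⟩ := exists_exp_mul_Hfun_le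
  obtain ⟨M, hupper⟩ := exists_Hfun_le_exp_mul hc0 hc1 hr
  rw [← Ioo_union_Ici_eq_Ioi hr] at hint1 hint ⊢
  refine eventually_setIntegral_union_pos (k := Hfun) (V := Ioo 0 q)
    (a := fun A ↦ κ * exp (-(A * q))) (b := fun A ↦ M * exp (-(A * (c * r))))
    measurableSet_Ioo measurableSet_Ici measurableSet_Ioo
    (Set.disjoint_left.2 fun s hs ↦ hs.2.not_ge) (Ioo_subset_Ioo_right hqr.le)
    hint1 ((eventually_gt_atTop 0).mono hint) hρ (fun s hs ↦ (Hfun_pos (hr.trans_le hs)).le)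
    ?_ ?_ ?_ (fun A ↦ by positivity) (tendsto_mul_exp_div_mul_exp ((div_lt_iff₀ hr).1 hqc) M κ) hq
  · filter_upwards [eventually_gt_atTop 0] with A hA s hs
    exact (Hfun_pos (mul_pos hA hs.1)).le
  · filter_upwards [eventually_ge_atTop 2] with A hA s hs
    refine le_trans ?_ (hlower A s hA hs.1)
    have := (Hfun_pos hs.1).le
    have := hs.2.le
    gcongr
  · filter_upwards [eventually_ge_atTop c⁻¹] with A hA s hs
    have hApos : 0 < A := (inv_pos.2 hc0).trans_le hA
    rw [abs_of_pos (Hfun_pos (mul_pos hApos (hr.trans_le hs)))]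
    exact hupper A s hA hs

lemma Hfun_mul_inv_mul {A s : ℝ} (hA : 0 < A) (hs : 0 < s) (y : ℝ) :
    Hfun (A * s⁻¹) * (s⁻¹ * y) = π / A * (Hfun (π ^ 2 / A * s) * y) := by
  have harg : π ^ 2 / (A * s⁻¹) = π ^ 2 / A * s := by field_simp
  rw [Hfun_eq_pi_div_mul (mul_pos hA (inv_pos.2 hs)), harg]
  field_simp

lemma inv_preimage_Ioi_zero : Inv.inv ⁻¹' Ioi (0 : ℝ) = Ioi 0 := by
  ext
  simp

lemma integrableOn_map_inv_Hfun_mul {A : ℝ} (hA : 0 < A)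
    (hint : IntegrableOn (fun s ↦ Hfun (π ^ 2 / A * s) * ρ s) (Ioi 0) ν) :
    IntegrableOn (fun u ↦ Hfun (A * u) * (u * ρ u⁻¹)) (Ioi 0) (ν.map Inv.inv) := by
  rw [measurableEmbedding_inv.integrableOn_map_iff, inv_preimage_Ioi_zero]
  refine IntegrableOn.congr_fun (hint.const_mul (π / A)) (fun s hs ↦ ?_) measurableSet_Ioi
  rw [Function.comp_apply, inv_inv, Hfun_mul_inv_mul hA hs]

lemma setIntegral_map_inv_Hfun_mul {A : ℝ} (hA : 0 < A) :
    ∫ u in Ioi 0, Hfun (A * u) * (u * ρ u⁻¹) ∂(ν.map Inv.inv) =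
      π / A * ∫ s in Ioi 0, Hfun (π ^ 2 / A * s) * ρ s ∂ν := by
  rw [measurableEmbedding_inv.setIntegral_map, inv_preimage_Ioi_zero,
    ← integral_const_mul]
  refine setIntegral_congr_fun measurableSet_Ioi fun s hs ↦ ?_
  rw [inv_inv, Hfun_mul_inv_mul hA hs]

theorem eventually_nhdsGT_zero_integral_Hfun_mul_pos (hr : 0 < r)
    (hρ : ∀ s ∈ Ioi r, 0 ≤ ρ s) (hne : ν {s ∈ Ioi r | ρ s ≠ 0} ≠ 0)
    (hint : ∀ A, 0 < A → IntegrableOn (fun s ↦ Hfun (A * s) * ρ s) (Ioi 0) ν) :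
    ∀ᶠ A in 𝓝[>] 0, 0 < ∫ s in Ioi 0, Hfun (A * s) * ρ s ∂ν := by
  have hρinv : ∀ u ∈ Ioo 0 r⁻¹, 0 ≤ u * ρ u⁻¹ := fun u hu ↦
    mul_nonneg hu.1.le (hρ _ ((lt_inv_comm₀ hu.1 hr).1 hu.2))
  have hneinv : ν.map Inv.inv {u ∈ Ioo 0 r⁻¹ | u * ρ u⁻¹ ≠ 0} ≠ 0 := by
    rw [measurableEmbedding_inv.map_apply]
    refine fun h0 ↦ hne (measure_mono_null (fun s hs ↦ ?_) h0)
    have hs0 : 0 < s := hr.trans hs.1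
    exact ⟨⟨inv_pos.2 hs0, inv_strictAnti₀ hr hs.1⟩,
      mul_ne_zero (inv_ne_zero hs0.ne') (by simpa using hs.2)⟩
  have hlarge := eventually_atTop_integral_Hfun_mul_pos (inv_pos.2 hr) hρinv hneinv
    fun A hA ↦ integrableOn_map_inv_Hfun_mul hA (hint _ (by positivity))
  have htendsto : Tendsto (fun A : ℝ ↦ π ^ 2 / A) (𝓝[>] 0) atTop :=
    tendsto_inv_nhdsGT_zero.const_mul_atTop (by positivity)
  filter_upwards [htendsto.eventually hlarge, self_mem_nhdsWithin] with A hI hA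
  have hA : 0 < A := hA
  rw [setIntegral_map_inv_Hfun_mul (by positivity), div_div_cancel₀ (by positivity)] at hI
  exact pos_of_mul_pos_right hI (by positivity)

theorem continuousOn_integral_Hfun_mul
    (hint : ∀ A, 0 < A → IntegrableOn (fun s ↦ Hfun (A * s) * ρ s) (Ioi 0) ν) :
    ContinuousOn (fun A ↦ ∫ s in Ioi 0, Hfun (A * s) * ρ s ∂ν) (Ioi 0) := by
  obtain ⟨M, hbound⟩ := exists_Hfun_le_add
  intro A hA
  have hA : 0 < A := hA
  refine (continuousAt_of_dominated
    (bound := fun s ↦ M * (|Hfun (A / 4 * s) * ρ s| + |Hfun (4 * A * s) * ρ s|))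
    ?_ ?_ ?_ ?_).continuousWithinAt
  · filter_upwards [Ioi_mem_nhds hA] with y hy using (hint y hy).aestronglyMeasurable
  · filter_upwards [Ioo_mem_nhds (half_lt_self hA) (by linarith : A < 2 * A)] with y hy
    filter_upwards [ae_restrict_mem measurableSet_Ioi] with s hs
    have hs : 0 < s := hs
    have hy0 : 0 < y := (half_pos hA).trans hy.1
    have hle := hbound (A * s) (y * s) (by positivity) (by nlinarith [hy.1]) (by nlinarith [hy.2])
    have hquarter : A / 4 * s = A * s / 4 := by ring
    rw [norm_mul, norm_of_nonneg (Hfun_pos (by positivity)).le, abs_mul, abs_mul,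
      abs_of_pos (Hfun_pos (by positivity)), abs_of_pos (Hfun_pos (by positivity)), ← add_mul,
      ← mul_assoc, hquarter, mul_assoc 4]
    exact mul_le_mul_of_nonneg_right hle (abs_nonneg _)
  · exact ((hint _ (by positivity)).abs.add (hint _ (by positivity)).abs).const_mul M
  · filter_upwards [ae_restrict_mem measurableSet_Ioi] with s hs
    have hAs : 0 < A * s := mul_pos hA hs
    exact (ContinuousAt.comp (f := (· * s)) (continuousOn_Hfun.continuousAt (Ioi_mem_nhds hAs))
      (by fun_prop)).mul_const _

theorem exists_transition_point_general {a b : ℝ} (ha : 0 < a) (hb : 0 < b)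
    (hneg : ∀ s ∈ Ioo 0 a, ρ s ≤ 0) (hneg_ne : ν {s ∈ Ioo 0 a | ρ s ≠ 0} ≠ 0)
    (hnonneg : ∀ s ∈ Ioi b, 0 ≤ ρ s) (hnonneg_ne : ν {s ∈ Ioi b | ρ s ≠ 0} ≠ 0)
    (hHint : ∀ A, 0 < A → IntegrableOn (fun s ↦ Hfun (A * s) * ρ s) (Ioi 0) ν)
    {E₂ : ℝ → ℝ} (hE₂ : ∀ A, 0 < A → E₂ A = (1 / 2) * ∫ s in Ioi 0, Hfun (A * s) * ρ s ∂ν) :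
    (∃ A, 0 < A ∧ 0 < E₂ A) ∧ (∃ A, 0 < A ∧ E₂ A < 0) ∧ ∃ A, 0 < A ∧ E₂ A = 0 := by
  have hE_pos : ∃ A, 0 < A ∧ 0 < E₂ A := by
    obtain ⟨A, hI, hA⟩ := ((eventually_nhdsGT_zero_integral_Hfun_mul_pos hb hnonneg hnonneg_ne
      hHint).and self_mem_nhdsWithin).exists
    exact ⟨A, hA, by rw [hE₂ A hA]; positivity⟩
  have hE_neg : ∃ A, 0 < A ∧ E₂ A < 0 := by
    obtain ⟨A, hI, hA⟩ := ((eventually_atTop_integral_Hfun_mul_pos (ρ := fun s ↦ -ρ s) ha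
      (fun s hs ↦ neg_nonneg.2 (hneg s hs)) (by simpa using hneg_ne)
      (by simpa using fun A hA ↦ (hHint A hA).neg)).and (eventually_gt_atTop 0)).exists
    simp only [mul_neg, integral_neg, Left.neg_pos_iff] at hI
    exact ⟨A, hA, by rw [hE₂ A hA]; linarith⟩
  refine ⟨hE_pos, hE_neg, ?_⟩
  obtain ⟨A, hA, hEA⟩ := hE_pos
  obtain ⟨B, hB, hEB⟩ := hE_neg
  have hcont : ContinuousOn E₂ (Ioi 0) :=
    ((continuousOn_integral_Hfun_mul hHint).const_mul (1 / 2)).congr hE₂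
  exact isPreconnected_Ioi.intermediate_value hB hA hcont ⟨hEB.le, hEA.le⟩

end

/-- Existence of a transition point: if the inverse-Laplace density `ρ` of the
potential `f` is negative on `(0,r₀)` and nonnegative, not (a.e.) identically zero,
on `(r₀,∞)`, `f` decays like `O(r^{−2−δ})`, and `E₂(A) := (1/2)∫₀^∞ H(As)ρ(s) ds` is
well defined, then `E₂` takes both signs and has a zero `A* > 0` (a transition point). -/
theorem exists_transition_point
    (ρ : ℝ → ℝ) (hρmeas : Measurable ρ) (r₀ : ℝ) (hr₀ : 0 < r₀)
    (hneg : ∀ s ∈ Set.Ioo (0 : ℝ) r₀, ρ s < 0)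
    (hnonneg : ∀ s ∈ Set.Ioi r₀, 0 ≤ ρ s)
    (hnontriv : volume {s ∈ Set.Ioi r₀ | ρ s ≠ 0} ≠ 0)
    (hfint : ∀ r : ℝ, 0 < r →
      IntegrableOn (fun s => Real.exp (-r ^ 2 * s) * ρ s) (Set.Ioi 0))
    (f : ℝ → ℝ)
    (hf : ∀ r : ℝ, 0 < r →
      f r = ∫ s in Set.Ioi (0 : ℝ), Real.exp (-r ^ 2 * s) * ρ s)
    (hdecay : ∃ δ : ℝ, 0 < δ ∧ ∃ C R : ℝ, ∀ r : ℝ, R ≤ r → |f r| ≤ C * r ^ (-(2 + δ)))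
    (hHint : ∀ A : ℝ, 0 < A →
      IntegrableOn (fun s => Hfun (A * s) * ρ s) (Set.Ioi 0))
    (E₂ : ℝ → ℝ)
    (hE₂ : ∀ A : ℝ, E₂ A = (1 / 2) * ∫ s in Set.Ioi (0 : ℝ), Hfun (A * s) * ρ s) :
    (∃ A : ℝ, 0 < A ∧ 0 < E₂ A) ∧ (∃ A : ℝ, 0 < A ∧ E₂ A < 0) ∧
      ∃ Astar : ℝ, 0 < Astar ∧ E₂ Astar = 0 := by
  refine exists_transition_point_general hr₀ hr₀ (fun s hs ↦ (hneg s hs).le) ?_ hnonneg hnontriv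
    hHint fun A _ ↦ hE₂ A
  rw [Set.sep_eq_self_iff_mem_true.2 fun s hs ↦ (hneg s hs).ne, Real.volume_Ioo]
  simpa using hr₀
end

section
/- (Asymptotics at a tricritical point.) Let G : ℝ × ℝ → ℝ be C⁸ on a neighborhood of (Aᵗ, 0), with G(A, −ε) = G(A, ε) for all (A, ε) in that neighborhood. Define E₂(A) := (1/2)·∂²G/∂ε²(A,0), E₄(A) := (1/24)·∂⁴G/∂ε⁴(A,0) and E₆(A) := (1/720)·∂⁶G/∂ε⁶(A,0), and assume E₂(Aᵗ) = 0, E₄(Aᵗ) = 0, E₂'(Aᵗ) < 0 and E₆(Aᵗ) > 0. Then there exist δ > 0 and a continuous function ε̄ : (Aᵗ, Aᵗ + δ) → (0,∞) such that for each A ∈ (Aᵗ, Aᵗ + δ), ε̄(A) is a critical point of ε ↦ G(A, ε), and ε̄(A)/(A − Aᵗ)^{1/4} → ( −E₂'(Aᵗ) / (3·E₆(Aᵗ)) )^{1/4} as A → (Aᵗ)⁺. In particular the critical exponent at the tricritical point is 1/4. -/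
open Filter Topology

/-!
The trivial branch `ε = 0` consists of critical points of `G(A, ·)`, so the sought branch is a
nontrivial zero of `g = ∂G/∂ε`. Put `t = (A - Aᵗ) ^ (1 / 4)` and blow up by `ε = t x`. Taylor's
formula in `ε` gives `g(A, t x) / t ^ 5 → 2 E₂'(Aᵗ) x + 6 E₆(Aᵗ) x ^ 5` as `A → Aᵗ⁺`, because
`E₂(A)` is of order `t ^ 4` and `E₄(A)`, being `O(t ^ 4)`, is negligible against `t ^ 2`. Likewise
the `x`-derivatives converge. The limit polynomial has a simple positive zero
`x₀ = (-E₂'(Aᵗ) / (3 E₆(Aᵗ))) ^ (1 / 4)`, at which it is increasing, so monotonicity and the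
intermediate value theorem continue `x₀` to a continuous family `X(A)` of zeros, and `ε̄ = t X`.
The same argument works when `∂g/∂ε, …, ∂ⁿg/∂εⁿ` vanish at the bifurcation point and
`∂ⁿ⁺¹g/∂εⁿ⁺¹` does not, with exponent `1 / n` in place of `1 / 4`.
-/

section IteratedPartialSnd

variable {𝕜 E F : Type*} [NontriviallyNormedField 𝕜]
  [NormedAddCommGroup F] [NormedSpace 𝕜 F]

/-- The `k`-th partial derivative of `g` with respect to its second, scalar variable. -/
noncomputable def iteratedPartialSnd (k : ℕ) (g : E × 𝕜 → F) (p : E × 𝕜) : F :=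
  iteratedDeriv k (fun e => g (p.1, e)) p.2

lemma iteratedPartialSnd_zero (g : E × 𝕜 → F) : iteratedPartialSnd 0 g = g := by
  ext p
  simp [iteratedPartialSnd]

lemma iteratedPartialSnd_one (g : E × 𝕜 → F) (p : E × 𝕜) :
    iteratedPartialSnd 1 g p = deriv (fun e => g (p.1, e)) p.2 := by
  rw [iteratedPartialSnd, iteratedDeriv_one]

lemma iteratedDeriv_iteratedPartialSnd (j k : ℕ) (g : E × 𝕜 → F) (p : E × 𝕜) :
    iteratedDeriv j (fun e => iteratedPartialSnd k g (p.1, e)) p.2 =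
      iteratedPartialSnd (k + j) g p := by
  simp only [iteratedPartialSnd, iteratedDeriv_eq_iterate, add_comm k j,
    Function.iterate_add_apply]

lemma iteratedPartialSnd_iteratedPartialSnd (j k : ℕ) (g : E × 𝕜 → F) :
    iteratedPartialSnd j (iteratedPartialSnd k g) = iteratedPartialSnd (k + j) g :=
  funext fun p => iteratedDeriv_iteratedPartialSnd j k g p

variable [NormedAddCommGroup E] [NormedSpace 𝕜 E]

lemma contDiffAt_iteratedPartialSnd_one {g : E × 𝕜 → F} {p : E × 𝕜} {n : ℕ}
    (hg : ContDiffAt 𝕜 (n + 1 : ℕ) g p) : ContDiffAt 𝕜 n (iteratedPartialSnd 1 g) p := by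
  have hfderiv : ContDiffAt 𝕜 n (fun q => fderiv 𝕜 g q (0, 1)) p :=
    (hg.fderiv_right le_rfl).clm_apply contDiffAt_const
  refine hfderiv.congr_of_eventuallyEq ?_
  filter_upwards [hg.eventually (by simp)] with q hq
  have hslice : HasDerivAt (fun e : 𝕜 => (q.1, e)) ((0, 1) : E × 𝕜) q.2 :=
    (hasDerivAt_const _ _).prodMk (hasDerivAt_id _)
  have hgq : HasFDerivAt g (fderiv 𝕜 g q) q := (hq.differentiableAt (by simp)).hasFDerivAt
  rw [iteratedPartialSnd_one]
  exact (HasFDerivAt.comp_hasDerivAt (f := fun e : 𝕜 => (q.1, e)) q.2 hgq hslice).deriv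

lemma contDiffAt_iteratedPartialSnd {g : E × 𝕜 → F} {p : E × 𝕜} {m : ℕ} (k : ℕ)
    (hg : ContDiffAt 𝕜 (k + m : ℕ) g p) : ContDiffAt 𝕜 m (iteratedPartialSnd k g) p := by
  induction k generalizing m with
  | zero => simpa [iteratedPartialSnd_zero] using hg
  | succ k ih =>
    rw [← iteratedPartialSnd_iteratedPartialSnd]
    exact contDiffAt_iteratedPartialSnd_one (ih (by rwa [add_assoc, add_comm 1 m] at hg))

end IteratedPartialSnd

lemma iteratedDeriv_zero_eq_zero_of_eventually_even {f : ℝ → ℝ}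
    (hf : ∀ᶠ e in 𝓝 0, f (-e) = f e) {k : ℕ} (hk : Odd k) : iteratedDeriv k f 0 = 0 := by
  have hneg : iteratedDeriv k (fun e => f (-e)) 0 = iteratedDeriv k f 0 :=
    EventuallyEq.iteratedDeriv_eq k hf
  rw [iteratedDeriv_comp_neg, hk.neg_one_pow, neg_zero, neg_one_smul] at hneg
  linarith

lemma eventually_odd_iteratedDeriv_zero_eq_zero {T : Type*} [TopologicalSpace T]
    {G : T × ℝ → ℝ} {a : T} (hG : ∀ᶠ p in 𝓝 (a, 0), G (p.1, -p.2) = G p) :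
    ∀ᶠ A in 𝓝 a, ∀ k, Odd k → iteratedDeriv k (fun ε => G (A, ε)) 0 = 0 :=
  hG.curry_nhds.mono fun _ hA _ hk => iteratedDeriv_zero_eq_zero_of_eventually_even hA hk

lemma exists_taylor_lagrange_remainder {f : ℝ → ℝ} {x₀ x : ℝ} {n : ℕ}
    (hf : ∀ y ∈ Set.uIcc x₀ x, ContDiffAt ℝ n f y) :
    ∃ ξ ∈ Set.uIcc x₀ x, f x =
      ∑ k ∈ Finset.range n, iteratedDeriv k f x₀ / k.factorial * (x - x₀) ^ k +
        iteratedDeriv n f ξ / n.factorial * (x - x₀) ^ n := by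
  rcases n with _ | n
  · exact ⟨x, Set.right_mem_uIcc, by simp⟩
  rcases eq_or_ne x₀ x with rfl | hx
  · exact ⟨x₀, Set.left_mem_uIcc, by simp [Finset.sum_range_succ']⟩
  have hcont : ContDiffOn ℝ (n + 1) f (Set.uIcc x₀ x) :=
    fun y hy => (hf y hy).contDiffWithinAt
  obtain ⟨ξ, hξ, hremainder⟩ := taylor_mean_remainder_lagrange_iteratedDeriv hx hcont
  refine ⟨ξ, Set.uIoo_subset_uIcc_self hξ, ?_⟩
  have hpoly : taylorWithinEval f n (Set.uIcc x₀ x) x₀ x =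
      ∑ k ∈ Finset.range (n + 1), iteratedDeriv k f x₀ / k.factorial * (x - x₀) ^ k := by
    rw [taylor_within_apply]
    refine Finset.sum_congr rfl fun k hk => ?_
    rw [iteratedDerivWithin_eq_iteratedDeriv (uniqueDiffOn_uIcc hx)
      ((hf x₀ Set.left_mem_uIcc).of_le (mod_cast (Finset.mem_range.1 hk).le)) Set.left_mem_uIcc,
      smul_eq_mul]
    ring
  rw [← hpoly, ← sub_eq_iff_eq_add', hremainder]
  ring

lemma eventually_prod_nhds_forall_mem_uIcc {ι : Type*} {l : Filter ι} {a : ℝ}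
    {P : ι → ℝ → Prop} (hP : ∀ᶠ p in l ×ˢ 𝓝 a, P p.1 p.2) :
    ∀ᶠ p in l ×ˢ 𝓝 a, ∀ y ∈ Set.uIcc a p.2, P p.1 y := by
  obtain ⟨Pι, hPι, Pa, hPa, h⟩ := eventually_prod_iff.1 hP
  have hseg : ∀ᶠ x in 𝓝 a, ∀ y ∈ Set.uIcc a x, Pa y :=
    (tendsto_const_nhds.uIcc tendsto_id).eventually (eventually_smallSets_forall.2 hPa)
  filter_upwards [hPι.prod_mk hseg] with p hp y hy
  exact h hp.1 (hp.2 y hy)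

lemma tendsto_comp_mul_div_pow_of_tendsto_iteratedDeriv {ι : Type*} {l : Filter ι} [l.NeBot]
    {f : ι → ℝ → ℝ} {t : ι → ℝ} {n : ℕ} {c : ℕ → ℝ}
    (ht : Tendsto t l (𝓝 0)) (ht0 : ∀ᶠ i in l, t i ≠ 0)
    (hf : ∀ᶠ p in l ×ˢ 𝓝 0, ContDiffAt ℝ n (f p.1) p.2)
    (hc : ∀ k < n, Tendsto (fun i => iteratedDeriv k (f i) 0 / t i ^ (n - k)) l (𝓝 (c k)))
    (hcn : Tendsto (fun p : ι × ℝ => iteratedDeriv n (f p.1) p.2) (l ×ˢ 𝓝 0) (𝓝 (c n)))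
    (x : ℝ) :
    Tendsto (fun p : ι × ℝ => f p.1 (t p.1 * p.2) / t p.1 ^ n) (l ×ˢ 𝓝 x)
      (𝓝 (∑ k ∈ Finset.range (n + 1), c k / k.factorial * x ^ k)) := by
  have hfst : Tendsto (fun p : ι × ℝ => p.1) (l ×ˢ 𝓝 x) l := tendsto_fst
  have hsnd : Tendsto (fun p : ι × ℝ => p.2) (l ×ˢ 𝓝 x) (𝓝 x) := tendsto_snd
  have hscaled : Tendsto (fun p : ι × ℝ => t p.1 * p.2) (l ×ˢ 𝓝 x) (𝓝 0) := by
    simpa using (ht.comp hfst).mul hsnd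
  have htaylor := (hfst.prodMk hscaled).eventually (eventually_prod_nhds_forall_mem_uIcc
    (P := fun i y => ContDiffAt ℝ n (f i) y) hf)
  obtain ⟨ξ, hξ⟩ := (htaylor.mono fun p hp => exists_taylor_lagrange_remainder hp).choice
  have hξ0 : Tendsto ξ (l ×ˢ 𝓝 x) (𝓝 0) :=
    (tendsto_const_nhds.uIcc hscaled).of_smallSets (hξ.mono fun p hp => hp.1)
  have hlimit := (tendsto_finsetSum (Finset.range n) fun k hk =>
      (((hc k (Finset.mem_range.1 hk)).comp hfst).div_const (k.factorial : ℝ)).mul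
        (hsnd.pow k)).add
    (((hcn.comp (hfst.prodMk hξ0)).div_const (n.factorial : ℝ)).mul (hsnd.pow n))
  rw [Finset.sum_range_succ]
  refine hlimit.congr' ?_
  filter_upwards [hξ, hfst.eventually ht0] with p hp hp0
  rw [hp.2, add_div, Finset.sum_div]
  congr 1
  · refine Finset.sum_congr rfl fun k hk => ?_
    have hpow : t p.1 ^ n = t p.1 ^ (n - k) * t p.1 ^ k := by
      rw [← pow_add, Nat.sub_add_cancel (Finset.mem_range.1 hk).le]
    simp only [Function.comp_apply, sub_zero, hpow, mul_pow]
    field_simp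
  · simp only [Function.comp_apply, sub_zero, mul_pow]
    field_simp

lemma tendsto_root_of_eventually_sign {ι α β : Type*} [LinearOrder α] [TopologicalSpace α]
    [OrderTopology α] [LinearOrder β] [Zero β] {l : Filter ι} {s : Set α} [s.OrdConnected]
    {Φ : ι → α → β} {X : ι → α} {x : α} (hx : x ∈ s)
    (hmono : ∀ᶠ i in l, MonotoneOn (Φ i) s) (hX : ∀ᶠ i in l, X i ∈ s ∧ Φ i (X i) = 0)
    (hneg : ∀ y ∈ s, y < x → ∀ᶠ i in l, Φ i y < 0)
    (hpos : ∀ y ∈ s, x < y → ∀ᶠ i in l, 0 < Φ i y) : Tendsto X l (𝓝 x) := by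
  refine tendsto_order.2 ⟨fun y hyx => ?_, fun y hxy => ?_⟩
  · by_cases hy : y ∈ s
    · filter_upwards [hmono, hX, hneg y hy hyx] with i hi ⟨hXs, hX0⟩ hΦy
      exact hi.reflect_lt hy hXs (hX0 ▸ hΦy)
    · filter_upwards [hX] with i ⟨hXs, _⟩
      exact not_le.1 fun hle => hy (Set.OrdConnected.out ‹_› hXs hx ⟨hle, hyx.le⟩)
  · by_cases hy : y ∈ s
    · filter_upwards [hmono, hX, hpos y hy hxy] with i hi ⟨hXs, hX0⟩ hΦy
      exact hi.reflect_lt hXs hy (hX0 ▸ hΦy)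
    · filter_upwards [hX] with i ⟨hXs, _⟩
      exact not_le.1 fun hle => hy (Set.OrdConnected.out ‹_› hx hXs ⟨hxy.le, hle⟩)

lemma exists_zero_branch_of_strictMonoOn {T : Type*} [TopologicalSpace T] {S : Set T} {a : T}
    [(𝓝[S] a).NeBot] {Φ : T → ℝ → ℝ} {c d x : ℝ} (hcx : c < x) (hxd : x < d)
    (hmono : ∀ᶠ A in 𝓝[S] a, StrictMonoOn (Φ A) (Set.Icc c d))
    (hcont : ∀ᶠ A in 𝓝[S] a, ContinuousOn (Φ A) (Set.Icc c d))
    (hcontS : ∀ᶠ A in 𝓝[S] a, ∀ y ∈ Set.Icc c d, ContinuousWithinAt (fun B => Φ B y) S A)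
    (hneg : ∀ y ∈ Set.Icc c d, y < x → ∀ᶠ A in 𝓝[S] a, Φ A y < 0)
    (hpos : ∀ y ∈ Set.Icc c d, x < y → ∀ᶠ A in 𝓝[S] a, 0 < Φ A y) :
    ∃ X : T → ℝ, Tendsto X (𝓝[S] a) (𝓝 x) ∧
      ∀ᶠ A in 𝓝[S] a, ContinuousWithinAt X S A ∧ Φ A (X A) = 0 := by
  have hcd : c ≤ d := (hcx.trans hxd).le
  have hroot : ∀ᶠ A in 𝓝[S] a, ∃ y, y ∈ Set.Icc c d ∧ Φ A y = 0 := by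
    filter_upwards [hcont, hneg c (Set.left_mem_Icc.2 hcd) hcx,
      hpos d (Set.right_mem_Icc.2 hcd) hxd] with A hA hAc hAd
    exact intermediate_value_Icc hcd hA ⟨hAc.le, hAd.le⟩
  obtain ⟨X, hX⟩ := hroot.choice
  have hmono' : ∀ᶠ A in 𝓝[S] a, MonotoneOn (Φ A) (Set.Icc c d) :=
    hmono.mono fun A hA => hA.monotoneOn
  have hx : x ∈ Set.Icc c d := ⟨hcx.le, hxd.le⟩
  refine ⟨X, tendsto_root_of_eventually_sign hx hmono' hX hneg hpos, ?_⟩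
  filter_upwards [hmono, hX, hcontS, eventually_eventually_nhdsWithin.2 hmono',
    eventually_eventually_nhdsWithin.2 hX] with A hA ⟨hXI, hX0⟩ hAS hmonoA hXA
  refine ⟨tendsto_root_of_eventually_sign hXI hmonoA hXA (fun y hy hyX => ?_)
    fun y hy hXy => ?_, hX0⟩
  · exact (hAS y hy).eventually_lt_const (hX0 ▸ hA hy hXI hyX)
  · exact (hAS y hy).eventually_const_lt (hX0 ▸ hA hXI hy hXy)

lemma exists_zero_branch_of_deriv_pos {T : Type*} [TopologicalSpace T] {S : Set T} {a : T}
    [(𝓝[S] a).NeBot] {Φ : T → ℝ → ℝ} {x : ℝ}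
    (hderiv : ∀ᶠ p in 𝓝[S] a ×ˢ 𝓝 x, 0 < deriv (Φ p.1) p.2)
    (hcont : ∀ᶠ p in 𝓝[S] a ×ˢ 𝓝 x, ContinuousWithinAt (fun A => Φ A p.2) S p.1)
    (hneg : ∀ᶠ y in 𝓝[<] x, ∀ᶠ A in 𝓝[S] a, Φ A y < 0)
    (hpos : ∀ᶠ y in 𝓝[>] x, ∀ᶠ A in 𝓝[S] a, 0 < Φ A y) :
    ∃ X : T → ℝ, Tendsto X (𝓝[S] a) (𝓝 x) ∧
      ∀ᶠ A in 𝓝[S] a, ContinuousWithinAt X S A ∧ Φ A (X A) = 0 := by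
  obtain ⟨PT, hPT, Px, hPx, hP⟩ := eventually_prod_iff.1 (hderiv.and hcont)
  obtain ⟨η, hη, hI⟩ := (nhds_basis_Icc_pos x).eventually_iff.1
    (hPx.and ((eventually_nhdsWithin_iff.1 hneg).and (eventually_nhdsWithin_iff.1 hpos)))
  have hcontI : ∀ᶠ A in 𝓝[S] a, ContinuousOn (Φ A) (Set.Icc (x - η) (x + η)) :=
    hPT.mono fun A hA y hy =>
      (differentiableAt_of_deriv_ne_zero
        (hP hA (hI hy).1).1.ne').continuousAt.continuousWithinAt
  refine exists_zero_branch_of_strictMonoOn (sub_lt_self x hη) (lt_add_of_pos_right x hη)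
    ?_ hcontI (hPT.mono fun A hA y hy => (hP hA (hI hy).1).2)
    (fun y hy => (hI hy).2.1) fun y hy => (hI hy).2.2
  filter_upwards [hPT, hcontI] with A hA hcontA
  exact strictMonoOn_of_deriv_pos (convex_Icc _ _) hcontA fun y hy =>
    (hP hA (hI (interior_subset hy)).1).1

lemma tendsto_iteratedPartialSnd_comp_mul_div_pow {E : Type*} [NormedAddCommGroup E]
    [NormedSpace ℝ E] {g : E × ℝ → ℝ} {a : E} {l : Filter E} [l.NeBot] {t : E → ℝ} {k n : ℕ}
    {c : ℕ → ℝ} (hg : ContDiffAt ℝ (k + n : ℕ) g (a, 0)) (hl : l ≤ 𝓝 a)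
    (ht : Tendsto t l (𝓝 0)) (ht0 : ∀ᶠ A in l, t A ≠ 0)
    (hc : ∀ j < n,
      Tendsto (fun A => iteratedPartialSnd (k + j) g (A, 0) / t A ^ (n - j)) l (𝓝 (c j)))
    (hcn : iteratedPartialSnd (k + n) g (a, 0) = c n) (x : ℝ) :
    Tendsto (fun p : E × ℝ => iteratedPartialSnd k g (p.1, t p.1 * p.2) / t p.1 ^ n) (l ×ˢ 𝓝 x)
      (𝓝 (∑ j ∈ Finset.range (n + 1), c j / j.factorial * x ^ j)) := by
  have hle : l ×ˢ 𝓝 (0 : ℝ) ≤ 𝓝 (a, 0) := by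
    rw [nhds_prod_eq]
    exact prod_mono_left _ hl
  refine tendsto_comp_mul_div_pow_of_tendsto_iteratedDeriv
    (f := fun A e => iteratedPartialSnd k g (A, e)) ht ht0 ?_ (fun j hj => ?_) ?_ x
  · filter_upwards [hle (hg.eventually (by simp [-Nat.cast_add]))] with p hp
    exact ContDiffAt.comp (f := fun e => (p.1, e)) p.2 (contDiffAt_iteratedPartialSnd k hp)
      (contDiffAt_const.prodMk contDiffAt_id)
  · exact (hc j hj).congr fun A => by rw [← iteratedDeriv_iteratedPartialSnd j k g (A, 0)]
  · have hlead : ContDiffAt ℝ 0 (iteratedPartialSnd (k + n) g) (a, 0) :=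
      contDiffAt_iteratedPartialSnd (k + n) hg
    simp only [iteratedDeriv_iteratedPartialSnd]
    rw [← hcn]
    exact hlead.continuousAt.tendsto.mono_left hle

/-- The length scale `(A - a) ^ (1 / n)` of a bifurcating branch. For `A < a` the real power
takes junk values, so it is only meaningful to the right of `a`. -/
noncomputable def rootScale (n : ℕ) (a A : ℝ) : ℝ := (A - a) ^ (n : ℝ)⁻¹

section RootScale

variable {n : ℕ} {a : ℝ}

lemma rootScale_pos {A : ℝ} (hA : a < A) : 0 < rootScale n a A :=
  Real.rpow_pos_of_pos (sub_pos.2 hA) _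

lemma eventually_rootScale_pos : ∀ᶠ A in 𝓝[>] a, 0 < rootScale n a A :=
  eventually_mem_nhdsWithin.mono fun _ => rootScale_pos

lemma eventually_rootScale_ne_zero : ∀ᶠ A in 𝓝[>] a, rootScale n a A ≠ 0 :=
  eventually_rootScale_pos.mono fun _ => ne_of_gt

lemma rootScale_pow (hn : n ≠ 0) {A : ℝ} (hA : a ≤ A) : rootScale n a A ^ n = A - a :=
  Real.rpow_inv_natCast_pow (sub_nonneg.2 hA) hn

lemma continuous_rootScale : Continuous (rootScale n a) :=
  (continuous_id.sub continuous_const).rpow_const fun _ => Or.inr (by positivity)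

lemma tendsto_rootScale_nhdsGT (hn : n ≠ 0) : Tendsto (rootScale n a) (𝓝[>] a) (𝓝 0) := by
  have hzero : rootScale n a a = 0 := by simp [rootScale, Real.zero_rpow, hn]
  exact hzero ▸ continuous_rootScale.continuousAt.tendsto.mono_left nhdsWithin_le_nhds

lemma tendsto_div_rootScale_pow (hn : n ≠ 0) {F : ℝ → ℝ} {F' : ℝ} (hF : HasDerivAt F F' a)
    (hFa : F a = 0) : Tendsto (fun A => F A / rootScale n a A ^ n) (𝓝[>] a) (𝓝 F') := by
  refine ((hasDerivWithinAt_iff_tendsto_slope' Set.self_notMem_Ioi).1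
    hF.hasDerivWithinAt).congr' ?_
  filter_upwards [self_mem_nhdsWithin] with A hA
  rw [rootScale_pow hn (le_of_lt hA), slope_def_field, hFa, sub_zero]

lemma tendsto_div_rootScale_pow_sub (hn : n ≠ 0) {F : ℝ → ℝ} (hF : DifferentiableAt ℝ F a)
    (hFa : F a = 0) {j : ℕ} (hj : j ≠ 0) (hjn : j ≤ n) :
    Tendsto (fun A => F A / rootScale n a A ^ (n - j)) (𝓝[>] a) (𝓝 0) := by
  have hprod := (tendsto_div_rootScale_pow hn hF.hasDerivAt hFa).mul
    ((tendsto_rootScale_nhdsGT hn).pow j)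
  rw [zero_pow hj, mul_zero] at hprod
  refine hprod.congr' ?_
  filter_upwards [self_mem_nhdsWithin] with A hA
  have hpow : rootScale n a A ^ n = rootScale n a A ^ (n - j) * rootScale n a A ^ j := by
    rw [← pow_add, Nat.sub_add_cancel hjn]
  have hpos : 0 < rootScale n a A := rootScale_pos hA
  rw [hpow]
  field_simp

end RootScale

/-- The limits, as `A → a⁺`, of the rescaled Taylor coefficients
`∂ₑᵏ g(A, 0) / (A - a) ^ ((n + 1 - k) / n)`, where `s` is the derivative of `A ↦ ∂ₑ g(A, 0)` at
`a` and `L` is `∂ₑⁿ⁺¹ g(a, 0)`. -/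
noncomputable def blowupCoeff (s L : ℝ) (n : ℕ) : ℕ → ℝ := Pi.single 1 s + Pi.single (n + 1) L

lemma sum_blowupCoeff (s L : ℝ) (n : ℕ) (x : ℝ) :
    ∑ k ∈ Finset.range (n + 1 + 1), blowupCoeff s L n k / k.factorial * x ^ k =
      s * x + L / (n + 1).factorial * x ^ (n + 1) := by
  simp [blowupCoeff, add_div, add_mul, Finset.sum_add_distrib, Pi.single_apply, ite_div, ite_mul]

lemma sum_blowupCoeff_succ (s L : ℝ) (n : ℕ) (x : ℝ) :
    ∑ k ∈ Finset.range (n + 1), blowupCoeff s L n (1 + k) / k.factorial * x ^ k =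
      s + L / n.factorial * x ^ n := by
  simp [blowupCoeff, add_div, add_mul, Finset.sum_add_distrib, Pi.single_apply, ite_div, ite_mul,
    add_comm 1]

/-- The zero set of `g(A, e)` contains the trivial branch `e = 0` for `A > a`, the linearization
`∂ₑ g(A, 0)` along it vanishes at `A = a` and has derivative `s` there, and the first
`e`-derivative of `g` that may be nonzero at `(a, 0)` is the one of order `n + 1`, with value
`L`. -/
structure DegenerateBifurcation (g : ℝ × ℝ → ℝ) (a s L : ℝ) (n : ℕ) : Prop where
  order_ne_zero : n ≠ 0
  contDiffAt : ContDiffAt ℝ (n + 1 : ℕ) g (a, 0)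
  trivial_branch : ∀ᶠ A in 𝓝[>] a, g (A, 0) = 0
  hasDerivAt_linearization : HasDerivAt (fun A => iteratedPartialSnd 1 g (A, 0)) s a
  jet_eq_zero : ∀ k ∈ Finset.Icc 1 n, iteratedPartialSnd k g (a, 0) = 0
  leading_eq : iteratedPartialSnd (n + 1) g (a, 0) = L

namespace DegenerateBifurcation

variable {g : ℝ × ℝ → ℝ} {a s L : ℝ} {n : ℕ}

lemma tendsto_coeff_div_rootScale_pow (h : DegenerateBifurcation g a s L n) {k : ℕ} (hk : k ≤ n) :
    Tendsto (fun A => iteratedPartialSnd k g (A, 0) / rootScale n a A ^ (n + 1 - k)) (𝓝[>] a)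
      (𝓝 (blowupCoeff s L n k)) := by
  rcases k with _ | _ | k
  · refine tendsto_const_nhds.congr' ?_
    filter_upwards [h.trivial_branch] with A hA
    simp [iteratedPartialSnd_zero, hA, blowupCoeff]
  · simpa [blowupCoeff, Pi.single_apply, h.order_ne_zero] using
      tendsto_div_rootScale_pow h.order_ne_zero h.hasDerivAt_linearization
        (h.jet_eq_zero 1 (Finset.mem_Icc.2 ⟨le_rfl, hk⟩))
  · have hdiff : DifferentiableAt ℝ (fun A => iteratedPartialSnd (k + 2) g (A, 0)) a := by
      have hsmooth : ContDiffAt ℝ 1 (iteratedPartialSnd (k + 2) g) (a, 0) :=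
        contDiffAt_iteratedPartialSnd (m := 1) (k + 2) (h.contDiffAt.of_le (mod_cast by omega))
      exact (hsmooth.differentiableAt one_ne_zero).comp a
        (f := fun A : ℝ => (A, (0 : ℝ))) (by fun_prop)
    have hexp : n + 1 - (k + 2) = n - (k + 1) := by omega
    have hzero : blowupCoeff s L n (k + 2) = 0 := by
      have hne : k + 2 ≠ n + 1 := by omega
      simp [blowupCoeff, hne]
    rw [hzero, hexp]
    exact tendsto_div_rootScale_pow_sub h.order_ne_zero hdiff
      (h.jet_eq_zero _ (Finset.mem_Icc.2 ⟨by omega, hk⟩)) k.succ_ne_zero (by omega)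

lemma tendsto_rescaled (h : DegenerateBifurcation g a s L n) (x : ℝ) :
    Tendsto (fun p : ℝ × ℝ => g (p.1, rootScale n a p.1 * p.2) / rootScale n a p.1 ^ (n + 1))
      (𝓝[>] a ×ˢ 𝓝 x) (𝓝 (s * x + L / (n + 1).factorial * x ^ (n + 1))) := by
  rw [← sum_blowupCoeff]
  have hblowup := tendsto_iteratedPartialSnd_comp_mul_div_pow (k := 0) (n := n + 1)
    (c := blowupCoeff s L n) (by rw [zero_add]; exact h.contDiffAt) nhdsWithin_le_nhds
    (tendsto_rootScale_nhdsGT h.order_ne_zero) eventually_rootScale_ne_zero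
    (fun k hk => by
      simpa only [zero_add] using h.tendsto_coeff_div_rootScale_pow (Nat.lt_succ_iff.1 hk))
    (by simp [h.leading_eq, blowupCoeff, h.order_ne_zero]) x
  simpa only [iteratedPartialSnd_zero] using hblowup

lemma tendsto_rescaled_partialSnd (h : DegenerateBifurcation g a s L n) (x : ℝ) :
    Tendsto (fun p : ℝ × ℝ =>
        iteratedPartialSnd 1 g (p.1, rootScale n a p.1 * p.2) / rootScale n a p.1 ^ n)
      (𝓝[>] a ×ˢ 𝓝 x) (𝓝 (s + L / n.factorial * x ^ n)) := by
  rw [← sum_blowupCoeff_succ]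
  refine tendsto_iteratedPartialSnd_comp_mul_div_pow (k := 1) (n := n)
    (c := fun j => blowupCoeff s L n (1 + j)) (by rw [add_comm]; exact h.contDiffAt)
    nhdsWithin_le_nhds (tendsto_rootScale_nhdsGT h.order_ne_zero) eventually_rootScale_ne_zero
    (fun j hj => ?_) (by simp [h.leading_eq, blowupCoeff, h.order_ne_zero, add_comm 1]) x
  have hexp : n + 1 - (1 + j) = n - j := by omega
  simpa only [hexp] using h.tendsto_coeff_div_rootScale_pow (k := 1 + j) (by omega)

lemma eventually_continuousAt_rescaled (h : DegenerateBifurcation g a s L n) (x : ℝ) :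
    ∀ᶠ p : ℝ × ℝ in 𝓝[>] a ×ˢ 𝓝 x,
      ContinuousAt (fun A => g (A, rootScale n a A * p.2)) p.1 := by
  have hscaled : Tendsto (fun p : ℝ × ℝ => rootScale n a p.1 * p.2) (𝓝[>] a ×ˢ 𝓝 x) (𝓝 0) := by
    simpa using ((tendsto_rootScale_nhdsGT h.order_ne_zero).comp tendsto_fst).mul
      (tendsto_snd (f := 𝓝[>] a) (g := 𝓝 x))
  have hpoint : Tendsto (fun p : ℝ × ℝ => (p.1, rootScale n a p.1 * p.2)) (𝓝[>] a ×ˢ 𝓝 x)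
      (𝓝 (a, 0)) := (tendsto_fst.mono_right nhdsWithin_le_nhds).prodMk_nhds hscaled
  filter_upwards [hpoint.eventually (h.contDiffAt.eventually (by simp))] with p hp
  exact ContinuousAt.comp (f := fun A => (A, rootScale n a A * p.2)) hp.continuousAt
    (continuous_id.prodMk (continuous_rootScale.mul continuous_const)).continuousAt

variable {x₀ : ℝ}

lemma eventually_deriv_rescaled_pos (h : DegenerateBifurcation g a s L n) (hs : s < 0)
    (hx₀ : L * x₀ ^ n = -((n + 1).factorial * s)) :
    ∀ᶠ p : ℝ × ℝ in 𝓝[>] a ×ˢ 𝓝 x₀, 0 < deriv (fun y => g (p.1, rootScale n a p.1 * y)) p.2 := by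
  have hlimit : s + L / n.factorial * x₀ ^ n = n * -s := by
    rw [Nat.factorial_succ, Nat.cast_mul, Nat.cast_add_one] at hx₀
    field_simp
    linear_combination hx₀
  have hlimit_pos : 0 < s + L / n.factorial * x₀ ^ n := by
    have hn : 0 < n := Nat.pos_of_ne_zero h.order_ne_zero
    have hs' : 0 < -s := neg_pos.2 hs
    rw [hlimit]
    positivity
  filter_upwards [(h.tendsto_rescaled_partialSnd x₀).eventually_const_lt hlimit_pos,
    tendsto_fst.eventually eventually_rootScale_pos] with p hp hpos
  rw [iteratedPartialSnd_one] at hp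
  rw [deriv_comp_mul_left (f := fun e => g (p.1, e)), smul_eq_mul]
  exact mul_pos hpos ((div_pos_iff_of_pos_right (pow_pos hpos n)).1 hp)

lemma tendsto_rescaled_slice (h : DegenerateBifurcation g a s L n)
    (hx₀ : L * x₀ ^ n = -((n + 1).factorial * s)) (y : ℝ) :
    Tendsto (fun A => g (A, rootScale n a A * y) / rootScale n a A ^ (n + 1)) (𝓝[>] a)
      (𝓝 (L / (n + 1).factorial * y * (y ^ n - x₀ ^ n))) := by
  have hfactor : s * y + L / (n + 1).factorial * y ^ (n + 1) =
      L / (n + 1).factorial * y * (y ^ n - x₀ ^ n) := by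
    field_simp
    linear_combination y * hx₀
  rw [← hfactor]
  exact (h.tendsto_rescaled y).comp (tendsto_id.prodMk tendsto_const_nhds)

lemma eventually_rescaled_neg (h : DegenerateBifurcation g a s L n) (hL : 0 < L)
    (hx₀ : L * x₀ ^ n = -((n + 1).factorial * s)) {y : ℝ} (hy : 0 < y) (hyx : y < x₀) :
    ∀ᶠ A in 𝓝[>] a, g (A, rootScale n a A * y) < 0 := by
  have hlimit : L / (n + 1).factorial * y * (y ^ n - x₀ ^ n) < 0 :=
    mul_neg_of_pos_of_neg (by positivity)
      (sub_neg.2 (pow_lt_pow_left₀ hyx hy.le h.order_ne_zero))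
  filter_upwards [(h.tendsto_rescaled_slice hx₀ y).eventually_lt_const hlimit,
    eventually_rootScale_pos] with A hA hpos
  exact not_le.1 fun hle => hA.not_ge (div_nonneg hle (pow_pos hpos _).le)

lemma eventually_rescaled_pos (h : DegenerateBifurcation g a s L n) (hL : 0 < L) (hx₀_pos : 0 < x₀)
    (hx₀ : L * x₀ ^ n = -((n + 1).factorial * s)) {y : ℝ} (hxy : x₀ < y) :
    ∀ᶠ A in 𝓝[>] a, 0 < g (A, rootScale n a A * y) := by
  have hy : 0 < y := hx₀_pos.trans hxy
  have hlimit : 0 < L / (n + 1).factorial * y * (y ^ n - x₀ ^ n) :=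
    mul_pos (by positivity) (sub_pos.2 (pow_lt_pow_left₀ hxy hx₀_pos.le h.order_ne_zero))
  filter_upwards [(h.tendsto_rescaled_slice hx₀ y).eventually_const_lt hlimit,
    eventually_rootScale_pos] with A hA hpos
  exact (div_pos_iff_of_pos_right (pow_pos hpos _)).1 hA

lemma exists_rescaled_zero_branch (h : DegenerateBifurcation g a s L n) (hs : s < 0) (hL : 0 < L)
    (hx₀_pos : 0 < x₀) (hx₀ : L * x₀ ^ n = -((n + 1).factorial * s)) :
    ∃ X : ℝ → ℝ, Tendsto X (𝓝[>] a) (𝓝 x₀) ∧ ∀ᶠ A in 𝓝[>] a,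
      ContinuousWithinAt X (Set.Ioi a) A ∧ g (A, rootScale n a A * X A) = 0 := by
  refine exists_zero_branch_of_deriv_pos (Φ := fun A y => g (A, rootScale n a A * y))
    (h.eventually_deriv_rescaled_pos hs hx₀)
    ((h.eventually_continuousAt_rescaled x₀).mono fun p hp => hp.continuousWithinAt) ?_ ?_
  · filter_upwards [Ioo_mem_nhdsLT hx₀_pos] with y hy
    exact h.eventually_rescaled_neg hL hx₀ hy.1 hy.2
  · filter_upwards [self_mem_nhdsWithin] with y hxy
    exact h.eventually_rescaled_pos hL hx₀_pos hx₀ hxy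

theorem exists_zero_branch (h : DegenerateBifurcation g a s L n) (hs : s < 0) (hL : 0 < L) :
    ∃ δ : ℝ, 0 < δ ∧ ∃ εbar : ℝ → ℝ, ContinuousOn εbar (Set.Ioo a (a + δ)) ∧
      (∀ A ∈ Set.Ioo a (a + δ), 0 < εbar A ∧ g (A, εbar A) = 0) ∧
      Tendsto (fun A => εbar A / (A - a) ^ (n : ℝ)⁻¹) (𝓝[>] a)
        (𝓝 ((-((n + 1).factorial * s) / L) ^ (n : ℝ)⁻¹)) := by
  have hratio : 0 < -((n + 1).factorial * s) / L :=
    div_pos (neg_pos.2 (mul_neg_of_pos_of_neg (by positivity) hs)) hL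
  have hx₀_pos := Real.rpow_pos_of_pos hratio (n : ℝ)⁻¹
  obtain ⟨X, hXlim, hX⟩ := h.exists_rescaled_zero_branch hs hL hx₀_pos
    (by rw [Real.rpow_inv_natCast_pow hratio.le h.order_ne_zero, mul_div_cancel₀ _ hL.ne'])
  obtain ⟨b, hab : a < b, hb⟩ := mem_nhdsGT_iff_exists_Ioo_subset.1
    (hX.and (hXlim.eventually_const_lt hx₀_pos))
  rw [← add_sub_cancel a b] at hb
  refine ⟨b - a, sub_pos.2 hab, fun A => rootScale n a A * X A, ?_, fun A hA => ?_, ?_⟩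
  · exact continuous_rootScale.continuousOn.mul fun A hA =>
      (hb hA).1.1.mono Set.Ioo_subset_Ioi_self
  · exact ⟨mul_pos (rootScale_pos hA.1) (hb hA).2, (hb hA).1.2⟩
  · refine hXlim.congr' ?_
    filter_upwards [self_mem_nhdsWithin] with A hA
    exact (mul_div_cancel_left₀ _ (rootScale_pos hA).ne').symm

end DegenerateBifurcation

theorem tricritical_point_asymptotics_general
    (G : ℝ × ℝ → ℝ) (At : ℝ) (hG : ContDiffAt ℝ 6 G (At, 0))
    (hcrit : ∀ᶠ A in 𝓝[>] At, deriv (fun ε => G (A, ε)) 0 = 0)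
    (hzero₃ : iteratedDeriv 3 (fun ε => G (At, ε)) 0 = 0)
    (hzero₅ : iteratedDeriv 5 (fun ε => G (At, ε)) 0 = 0)
    (E₂ E₄ E₆ : ℝ → ℝ)
    (hE₂ : ∀ A : ℝ, E₂ A = (1 / 2) * iteratedDeriv 2 (fun ε => G (A, ε)) 0)
    (hE₄ : ∀ A : ℝ, E₄ A = (1 / 24) * iteratedDeriv 4 (fun ε => G (A, ε)) 0)
    (hE₆ : ∀ A : ℝ, E₆ A = (1 / 720) * iteratedDeriv 6 (fun ε => G (A, ε)) 0)
    (hzero₂ : E₂ At = 0) (hzero₄ : E₄ At = 0)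
    (hslope : deriv E₂ At < 0) (hE₆pos : 0 < E₆ At) :
    ∃ δ : ℝ, 0 < δ ∧ ∃ εbar : ℝ → ℝ,
      ContinuousOn εbar (Set.Ioo At (At + δ)) ∧
      (∀ A ∈ Set.Ioo At (At + δ),
        0 < εbar A ∧ deriv (fun ε => G (A, ε)) (εbar A) = 0) ∧
      Tendsto (fun A => εbar A / (A - At) ^ ((1 : ℝ) / 4)) (𝓝[>] At)
        (𝓝 ((-(deriv E₂ At) / (3 * E₆ At)) ^ ((1 : ℝ) / 4))) := by
  have hpartial (j : ℕ) (A : ℝ) : iteratedPartialSnd j (iteratedPartialSnd 1 G) (A, 0) =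
      iteratedDeriv (1 + j) (fun ε => G (A, ε)) 0 := by
    rw [iteratedPartialSnd_iteratedPartialSnd, iteratedPartialSnd]
  have hlinearization : HasDerivAt (fun A => iteratedPartialSnd 1 (iteratedPartialSnd 1 G) (A, 0))
      (2 * deriv E₂ At) At := by
    convert! (differentiableAt_of_deriv_ne_zero hslope.ne).hasDerivAt.const_mul 2 using 2
    rw [hpartial, hE₂]
    ring
  have hbif : DegenerateBifurcation (iteratedPartialSnd 1 G) At (2 * deriv E₂ At) (720 * E₆ At) 4 :=
    { order_ne_zero := four_ne_zero
      contDiffAt := contDiffAt_iteratedPartialSnd (m := 5) 1 hG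
      trivial_branch := by simpa only [iteratedPartialSnd_one] using hcrit
      hasDerivAt_linearization := hlinearization
      jet_eq_zero := fun j hj => by
        rw [hpartial]
        fin_cases hj <;> simp_all
      leading_eq := by
        rw [hpartial, hE₆]
        ring }
  have hconst : -(((4 + 1).factorial : ℝ) * (2 * deriv E₂ At)) / (720 * E₆ At) =
      -(deriv E₂ At) / (3 * E₆ At) := by
    norm_num [Nat.factorial]
    field_simp
    ring
  have hbranch := hbif.exists_zero_branch (by linarith) (by linarith)
  rw [hconst] at hbranch
  simpa only [iteratedPartialSnd_one, Nat.cast_ofNat, one_div] using hbranch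

/-- Asymptotics at a tricritical point: for an even-in-`ε`, `C⁸` energy `G` with
`E₂(Aᵗ) = 0`, `E₄(Aᵗ) = 0`, `E₂'(Aᵗ) < 0`, `E₆(Aᵗ) > 0`, just above `Aᵗ` there is a
continuous branch `ε̄(A) > 0` of critical points of `ε ↦ G(A,ε)` with
`ε̄(A)/(A−Aᵗ)^{1/4} → (−E₂'(Aᵗ)/(3E₆(Aᵗ)))^{1/4}` as `A → Aᵗ⁺`; in particular the
critical exponent at the tricritical point is `1/4`. -/
theorem tricritical_point_asymptotics
    (G : ℝ × ℝ → ℝ) (At : ℝ) (U : Set (ℝ × ℝ)) (hU : U ∈ 𝓝 ((At, 0) : ℝ × ℝ))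
    (hG : ContDiffOn ℝ 8 G U)
    (heven : ∀ A ε : ℝ, (A, ε) ∈ U → G (A, -ε) = G (A, ε))
    (E₂ E₄ E₆ : ℝ → ℝ)
    (hE₂ : ∀ A : ℝ, E₂ A = (1 / 2) * iteratedDeriv 2 (fun ε => G (A, ε)) 0)
    (hE₄ : ∀ A : ℝ, E₄ A = (1 / 24) * iteratedDeriv 4 (fun ε => G (A, ε)) 0)
    (hE₆ : ∀ A : ℝ, E₆ A = (1 / 720) * iteratedDeriv 6 (fun ε => G (A, ε)) 0)
    (hzero₂ : E₂ At = 0) (hzero₄ : E₄ At = 0)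
    (hslope : deriv E₂ At < 0) (hE₆pos : 0 < E₆ At) :
    ∃ δ : ℝ, 0 < δ ∧ ∃ εbar : ℝ → ℝ,
      ContinuousOn εbar (Set.Ioo At (At + δ)) ∧
      (∀ A ∈ Set.Ioo At (At + δ),
        0 < εbar A ∧ deriv (fun ε => G (A, ε)) (εbar A) = 0) ∧
      Tendsto (fun A => εbar A / (A - At) ^ ((1 : ℝ) / 4)) (𝓝[>] At)
        (𝓝 ((-(deriv E₂ At) / (3 * E₆ At)) ^ ((1 : ℝ) / 4))) := by
  have hodd := eventually_odd_iteratedDeriv_zero_eq_zero (mem_of_superset hU fun p => heven p.1 p.2)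
  exact tricritical_point_asymptotics_general G At ((hG.contDiffAt hU).of_le (by norm_num))
    (nhdsWithin_le_nhds (hodd.mono fun A hA => by simpa using hA 1 odd_one))
    (hodd.self_of_nhds 3 (by decide)) (hodd.self_of_nhds 5 (by decide))
    E₂ E₄ E₆ hE₂ hE₄ hE₆ hzero₂ hzero₄ hslope hE₆pos
end

section
/- (Second and fourth ε-derivatives of the double Yukawa lattice energy.) Let v₁ > v₂ > 0 and κ₁ > κ₂ > 0, let f(r) := v₁·e^{−κ₁ r}/r − v₂·e^{−κ₂ r}/r, and set ρ(s) := (πs)^{−1/2}·( v₁·exp(−κ₁²/(4s)) − v₂·exp(−κ₂²/(4s)) ). Fix A > 0 and define F(ε) := (1/2) Σ_{(j,k)∈ℤ²∖{(0,0)}} f(√(A(j²e^{−ε} + k²e^{ε}))) for ε ∈ ℝ (i.e., F(ε) = E(A, e^{ε})). Then F is smooth and even, and d²F/dε²(0) = ∫₀^∞ H(As)·ρ(s) ds, where H(t) := t·Θ(t)·Θ'(t) + t²·Θ(t)·Θ''(t) − t²·(Θ'(t))²; moreover d⁴F/dε⁴(0) = ∫₀^∞ K(As)·ρ(s) ds,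 where K(t) := t·Θ(t)Θ'(t) − t²·(Θ'(t))² + 7t²·Θ(t)Θ''(t) + 6t³·Θ(t)Θ'''(t) − 6t³·Θ'(t)Θ''(t) + t⁴·Θ(t)Θ''''(t) − 4t⁴·Θ'(t)Θ'''(t) + 3t⁴·(Θ''(t))². -/
open MeasureTheory

/-- `K(t) := t·Θ·Θ' − t²(Θ')² + 7t²·Θ·Θ'' + 6t³·Θ·Θ''' − 6t³·Θ'·Θ'' + t⁴·Θ·Θ''''
− 4t⁴·Θ'·Θ''' + 3t⁴·(Θ'')²`, all derivatives evaluated at `t`. -/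
noncomputable def Kfun (t : ℝ) : ℝ :=
  t * Θ t * deriv Θ t - t ^ 2 * (deriv Θ t) ^ 2 +
    7 * t ^ 2 * Θ t * iteratedDeriv 2 Θ t +
    6 * t ^ 3 * Θ t * iteratedDeriv 3 Θ t -
    6 * t ^ 3 * deriv Θ t * iteratedDeriv 2 Θ t +
    t ^ 4 * Θ t * iteratedDeriv 4 Θ t -
    4 * t ^ 4 * deriv Θ t * iteratedDeriv 3 Θ t +
    3 * t ^ 4 * (iteratedDeriv 2 Θ t) ^ 2

/-!
If `f r` is the Laplace transform of a density `ρ` at `r ^ 2`, then summing over the lattice under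
the integral turns the energy into `(1 / 2) ∫ ρ(s) (Θ(A s e^{-ε}) Θ(A s e^ε) - 1) ds`. The theta
product is holomorphic in complex `ε` near the real axis, where `Θ(A s e^{-ε}) Θ(A s e^ε) - 1` has
modulus at most `coth² (c s) - 1 = 1 / sinh² (c s)`, with `c > 0` locally uniform in `ε`. Cauchy's
estimate therefore makes the integral smooth in `ε` and differentiable under the integral sign as
soon as `ρ` is integrable against `1 / sinh² (c s)`. The integrands `H` and `K` come from the
Leibniz rule applied to `g(-ε) g(ε)` with `g(ε) = Θ(t e^ε)`, on which `d/dε` acts as `t d/dt`.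
For Yukawa potentials the Laplace transform is integrated in closed form by error functions, and
the factor `exp (-κ² / (4 s))` compensates the singularity of `1 / sinh² (c s)` at `s = 0`.
-/

open Filter Topology Set

section HolomorphicFamily

variable {α E : Type*} [MeasurableSpace α] {μ : Measure α} [NormedAddCommGroup E] [NormedSpace ℂ E]
  {φ : α → ℂ → E} {U : Set ℂ}

/-- A measurable family of functions that are holomorphic on `U` and, near each point of `U`,
uniformly bounded by an integrable function of the parameter. No bound on derivatives is asked for:
Cauchy's estimate supplies it. -/
structure IsDominatedHolomorphicFamily (μ : Measure α) (φ : α → ℂ → E) (U : Set ℂ) : Prop where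
  aestronglyMeasurable : ∀ z ∈ U, AEStronglyMeasurable (φ · z) μ
  differentiableOn : ∀ᵐ s ∂μ, DifferentiableOn ℂ (φ s) U
  exists_bound : ∀ z₀ ∈ U, ∃ V ∈ 𝓝 z₀, ∃ g : α → ℝ, Integrable g μ ∧
    ∀ᵐ s ∂μ, ∀ z ∈ V, ‖φ s z‖ ≤ g s

namespace IsDominatedHolomorphicFamily

lemma integrable (hφ : IsDominatedHolomorphicFamily μ φ U) {z : ℂ} (hz : z ∈ U) :
    Integrable (φ · z) μ := by
  obtain ⟨V, hV, g, hg, hbound⟩ := hφ.exists_bound z hz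
  exact hg.mono' (hφ.aestronglyMeasurable z hz) (hbound.mono fun s hs => hs z (mem_of_mem_nhds hV))

lemma aestronglyMeasurable_deriv (hφ : IsDominatedHolomorphicFamily μ φ U) (hU : IsOpen U)
    {z : ℂ} (hz : z ∈ U) : AEStronglyMeasurable (fun s => deriv (φ s) z) μ := by
  have hfreq : ∃ᶠ w in 𝓝[≠] z, w ∈ U :=
    (eventually_nhdsWithin_of_eventually_nhds (hU.mem_nhds hz)).frequently
  obtain ⟨w, hw, hwU⟩ := exists_seq_forall_of_frequently hfreq
  refine aestronglyMeasurable_of_tendsto_ae atTop (f := fun n s => slope (φ s) z (w n))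
    (fun n => ?_) ?_
  · simp only [slope_def_module]
    exact ((hφ.aestronglyMeasurable _ (hwU n)).sub (hφ.aestronglyMeasurable z hz)).const_smul _
  · filter_upwards [hφ.differentiableOn] with s hs
    exact (hs.hasDerivAt (hU.mem_nhds hz)).tendsto_slope.comp hw

lemma exists_bound_deriv (hφ : IsDominatedHolomorphicFamily μ φ U) (hU : IsOpen U)
    {z₀ : ℂ} (hz₀ : z₀ ∈ U) : ∃ V ∈ 𝓝 z₀, ∃ g : α → ℝ, Integrable g μ ∧
      ∀ᵐ s ∂μ, ∀ z ∈ V, ‖deriv (φ s) z‖ ≤ g s := by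
  obtain ⟨V, hV, g, hg, hbound⟩ := hφ.exists_bound z₀ hz₀
  obtain ⟨r, hr, hball⟩ := Metric.mem_nhds_iff.1 (inter_mem hV (hU.mem_nhds hz₀))
  have hclosedBall {z : ℂ} (hz : z ∈ Metric.ball z₀ (r / 2)) :
      Metric.closedBall z (r / 2) ⊆ V ∩ U :=
    (Metric.closedBall_subset_ball' (by linarith [Metric.mem_ball.1 hz])).trans hball
  refine ⟨_, Metric.ball_mem_nhds z₀ (half_pos hr), fun s => g s / (r / 2), hg.div_const _, ?_⟩
  filter_upwards [hφ.differentiableOn, hbound] with s hdiff hs z hz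
  refine Complex.norm_deriv_le_of_forall_mem_sphere_norm_le (half_pos hr) ?_ fun w hw =>
    hs w (hclosedBall hz (Metric.sphere_subset_closedBall hw)).1
  exact (hdiff.mono fun w hw => (hclosedBall hz hw).2).diffContOnCl_ball subset_rfl

lemma deriv [CompleteSpace E] (hφ : IsDominatedHolomorphicFamily μ φ U) (hU : IsOpen U) :
    IsDominatedHolomorphicFamily μ (fun s => deriv (φ s)) U where
  aestronglyMeasurable _ hz := hφ.aestronglyMeasurable_deriv hU hz
  differentiableOn := hφ.differentiableOn.mono fun _ hs => hs.deriv hU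
  exists_bound _ hz₀ := hφ.exists_bound_deriv hU hz₀

lemma hasDerivAt_integral (hφ : IsDominatedHolomorphicFamily μ φ U)
    (hU : IsOpen U) {z : ℂ} (hz : z ∈ U) :
    HasDerivAt (fun z => ∫ s, φ s z ∂μ) (∫ s, _root_.deriv (φ s) z ∂μ) z := by
  obtain ⟨V, hV, g, hg, hbound⟩ := hφ.exists_bound_deriv hU hz
  refine (hasDerivAt_integral_of_dominated_loc_of_deriv_le (F := fun z s => φ s z)
    (inter_mem hV (hU.mem_nhds hz)) ?_ (hφ.integrable hz) (hφ.aestronglyMeasurable_deriv hU hz)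
    (hbound.mono fun s hs w hw => hs w hw.1) hg ?_).2
  · filter_upwards [hU.mem_nhds hz] with w hw using hφ.aestronglyMeasurable w hw
  · filter_upwards [hφ.differentiableOn] with s hs w hw
    exact hs.hasDerivAt (hU.mem_nhds hw.2)

lemma differentiableOn_integral (hφ : IsDominatedHolomorphicFamily μ φ U) (hU : IsOpen U) :
    DifferentiableOn ℂ (fun z => ∫ s, φ s z ∂μ) U := fun _ hz =>
  (hφ.hasDerivAt_integral hU hz).differentiableAt.differentiableWithinAt

lemma iteratedDeriv_integral [CompleteSpace E] (hφ : IsDominatedHolomorphicFamily μ φ U)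
    (hU : IsOpen U) (n : ℕ) :
    EqOn (iteratedDeriv n fun z => ∫ s, φ s z ∂μ) (fun z => ∫ s, iteratedDeriv n (φ s) z ∂μ) U := by
  induction n generalizing φ with
  | zero => exact fun z _ => by simp only [iteratedDeriv_zero]
  | succ n ih =>
    have hderiv : EqOn (_root_.deriv fun z => ∫ s, φ s z ∂μ)
        (fun z => ∫ s, _root_.deriv (φ s) z ∂μ) U := fun z hz =>
      (hφ.hasDerivAt_integral hU hz).deriv
    intro z hz
    simp only [iteratedDeriv_succ']
    rw [hderiv.iteratedDeriv_of_isOpen hU n hz, ih (hφ.deriv hU) hz]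

end IsDominatedHolomorphicFamily

end HolomorphicFamily

section RealTrace

variable {G : ℂ → ℂ} {F : ℝ → ℝ} {U : Set ℂ}

lemma contDiffAt_of_eq_ofReal (hU : IsOpen U) (hG : DifferentiableOn ℂ G U)
    (hGF : ∀ x : ℝ, (x : ℂ) ∈ U → G x = F x) {x : ℝ} (hx : (x : ℂ) ∈ U) {n : WithTop ℕ∞} :
    ContDiffAt ℝ n F x := by
  refine (hG.analyticAt (hU.mem_nhds hx)).contDiffAt.real_of_complex.congr_of_eventuallyEq ?_
  filter_upwards [Complex.continuous_ofReal.continuousAt.eventually (hU.mem_nhds hx)] with y hy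
  rw [hGF y hy, Complex.ofReal_re]

lemma deriv_eq_ofReal_deriv (hU : IsOpen U) (hG : DifferentiableOn ℂ G U)
    (hGF : ∀ x : ℝ, (x : ℂ) ∈ U → G x = F x) {x : ℝ} (hx : (x : ℂ) ∈ U) :
    deriv G x = (deriv F x : ℝ) := by
  have hF : HasDerivAt F (deriv F x) x :=
    ((contDiffAt_of_eq_ofReal hU hG hGF hx (n := 1)).differentiableAt one_ne_zero).hasDerivAt
  refine (hG.hasDerivAt (hU.mem_nhds hx)).comp_ofReal.unique
    (hF.ofReal_comp.congr_of_eventuallyEq ?_)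
  filter_upwards [Complex.continuous_ofReal.continuousAt.eventually (hU.mem_nhds hx)] with y hy
    using hGF y hy

lemma iteratedDeriv_eq_ofReal_iteratedDeriv (hU : IsOpen U) (hG : DifferentiableOn ℂ G U)
    (hGF : ∀ x : ℝ, (x : ℂ) ∈ U → G x = F x) (n : ℕ) {x : ℝ} (hx : (x : ℂ) ∈ U) :
    iteratedDeriv n G x = (iteratedDeriv n F x : ℝ) := by
  induction n generalizing G F with
  | zero => simpa only [iteratedDeriv_zero] using hGF x hx
  | succ n ih =>
    simp only [iteratedDeriv_succ']
    exact ih (hG.deriv hU) fun y hy => deriv_eq_ofReal_deriv hU hG hGF hy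

end RealTrace

section RealIntegral

variable {α : Type*} [MeasurableSpace α] {μ : Measure α} {φ : α → ℂ → ℂ} {f : α → ℝ → ℝ} {U : Set ℂ}

lemma integral_eq_ofReal_integral (hφf : ∀ᵐ s ∂μ, ∀ x : ℝ, φ s x = f s x) (x : ℝ) :
    ∫ s, φ s x ∂μ = (∫ s, f s x ∂μ : ℝ) := by
  rw [← integral_complex_ofReal]
  exact integral_congr_ae (hφf.mono fun s hs => hs x)

lemma contDiff_integral_of_isDominatedHolomorphicFamily (hφ : IsDominatedHolomorphicFamily μ φ U)
    (hU : IsOpen U) (hreal : ∀ x : ℝ, (x : ℂ) ∈ U) (hφf : ∀ᵐ s ∂μ, ∀ x : ℝ, φ s x = f s x)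
    {n : WithTop ℕ∞} : ContDiff ℝ n fun x => ∫ s, f s x ∂μ :=
  contDiff_iff_contDiffAt.2 fun x => contDiffAt_of_eq_ofReal hU (hφ.differentiableOn_integral hU)
    (fun y _ => integral_eq_ofReal_integral hφf y) (hreal x)

lemma iteratedDeriv_integral_of_isDominatedHolomorphicFamily
    (hφ : IsDominatedHolomorphicFamily μ φ U) (hU : IsOpen U) (hreal : ∀ x : ℝ, (x : ℂ) ∈ U)
    (hφf : ∀ᵐ s ∂μ, ∀ x : ℝ, φ s x = f s x) (n : ℕ) (x : ℝ) :
    iteratedDeriv n (fun x => ∫ s, f s x ∂μ) x = ∫ s, iteratedDeriv n (f s) x ∂μ := by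
  apply Complex.ofReal_injective
  calc ((iteratedDeriv n (fun x => ∫ s, f s x ∂μ) x : ℝ) : ℂ)
      = iteratedDeriv n (fun z => ∫ s, φ s z ∂μ) x :=
        (iteratedDeriv_eq_ofReal_iteratedDeriv hU (hφ.differentiableOn_integral hU)
          (fun y _ => integral_eq_ofReal_integral hφf y) n (hreal x)).symm
    _ = ∫ s, iteratedDeriv n (φ s) x ∂μ := hφ.iteratedDeriv_integral hU n (hreal x)
    _ = ∫ s, ((iteratedDeriv n (f s) x : ℝ) : ℂ) ∂μ := by
        refine integral_congr_ae ?_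
        filter_upwards [hφ.differentiableOn, hφf] with s hdiff hs
        exact iteratedDeriv_eq_ofReal_iteratedDeriv hU hdiff (fun y _ => hs y) n (hreal x)
    _ = (∫ s, iteratedDeriv n (f s) x ∂μ : ℝ) := integral_complex_ofReal

end RealIntegral

section EulerOperator

open scoped ContDiff

lemma hasDerivAt_iteratedDeriv_of_contDiffAt {𝕜 E : Type*} [NontriviallyNormedField 𝕜]
    [NormedAddCommGroup E] [NormedSpace 𝕜 E] {f : 𝕜 → E} {x : 𝕜} {m : WithTop ℕ∞} {n : ℕ}
    (hf : ContDiffAt 𝕜 m f x) (hn : n < m) :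
    HasDerivAt (iteratedDeriv n f) (iteratedDeriv (n + 1) f x) x := by
  rw [iteratedDeriv_succ, ← iteratedDerivWithin_univ, hasDerivAt_deriv_iff,
    ← differentiableWithinAt_univ]
  refine hf.contDiffWithinAt.differentiableWithinAt_iteratedDerivWithin hn ?_
  simp only [mem_univ, insert_eq_of_mem, uniqueDiffOn_univ]

lemma sum_stirlingSecond_succ (n : ℕ) (a : ℕ → ℝ) :
    ∑ j ∈ Finset.range (n + 2), (Nat.stirlingSecond (n + 1) j : ℝ) * a j =
      ∑ j ∈ Finset.range (n + 1), (Nat.stirlingSecond n j : ℝ) * (j * a j + a (j + 1)) := by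
  have hshift : ∑ j ∈ Finset.range (n + 1), ((j + 1 : ℕ) : ℝ) * Nat.stirlingSecond n (j + 1) *
      a (j + 1) = ∑ j ∈ Finset.range (n + 1), (j : ℝ) * Nat.stirlingSecond n j * a j := by
    have h := Finset.sum_range_succ' (fun j => (j : ℝ) * Nat.stirlingSecond n j * a j) (n + 1)
    rw [Finset.sum_range_succ, Nat.stirlingSecond_eq_zero_of_lt n.lt_succ_self] at h
    simpa using h.symm
  rw [Finset.sum_range_succ', Nat.stirlingSecond_succ_zero, Nat.cast_zero, zero_mul, add_zero]
  simp only [Nat.stirlingSecond_succ_succ, mul_add, Finset.sum_add_distrib]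
  push_cast at hshift ⊢
  simp only [add_mul, Finset.sum_add_distrib] at hshift ⊢
  rw [hshift]
  congr 1
  exact Finset.sum_congr rfl fun j _ => by ring

/-- In the variable `u = t eˣ` the operator `d/dx` is the Euler operator `u d/du`, whose powers
expand with Stirling numbers of the second kind. -/
lemma iteratedDeriv_comp_mul_exp {f : ℝ → ℝ} {t : ℝ}
    (hf : ∀ x, ContDiffAt ℝ ∞ f (t * Real.exp x)) (n : ℕ) (x : ℝ) :
    iteratedDeriv n (fun x => f (t * Real.exp x)) x =
      ∑ j ∈ Finset.range (n + 1), (Nat.stirlingSecond n j : ℝ) *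
        ((t * Real.exp x) ^ j * iteratedDeriv j f (t * Real.exp x)) := by
  induction n generalizing x with
  | zero => simp
  | succ n ih =>
    have hu : HasDerivAt (fun x => t * Real.exp x) (t * Real.exp x) x :=
      (Real.hasDerivAt_exp x).const_mul t
    have hj (j : ℕ) := hasDerivAt_iteratedDeriv_of_contDiffAt (hf x) (n := j)
      (WithTop.coe_lt_coe.2 (ENat.natCast_lt_top j))
    have hterm (j : ℕ) : HasDerivAt
        (fun x => (t * Real.exp x) ^ j * iteratedDeriv j f (t * Real.exp x))
        (j * ((t * Real.exp x) ^ j * iteratedDeriv j f (t * Real.exp x)) +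
          (t * Real.exp x) ^ (j + 1) * iteratedDeriv (j + 1) f (t * Real.exp x)) x := by
      refine ((hu.fun_pow j).mul ((hj j).comp x hu)).congr_deriv ?_
      rcases j with _ | j
      · simp [mul_comm]
      · simp only [Function.comp_apply, Nat.add_sub_cancel]
        ring
    rw [iteratedDeriv_succ, funext ih, sum_stirlingSecond_succ]
    exact (HasDerivAt.fun_sum fun j _ => (hterm j).const_mul _).deriv

lemma iteratedDeriv_neg_mul_self {g : ℝ → ℝ} {n : ℕ} (hg : ContDiffAt ℝ n g 0) :
    iteratedDeriv n (fun x => g (-x) * g x) 0 =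
      ∑ i ∈ Finset.range (n + 1),
        (-1) ^ i * (n.choose i * iteratedDeriv i g 0 * iteratedDeriv (n - i) g 0) := by
  have hneg : ContDiffAt ℝ n (fun x => g (-x)) 0 :=
    ContDiffAt.comp 0 (by simpa using hg) contDiff_neg.contDiffAt
  rw [iteratedDeriv_fun_mul hneg hg]
  refine Finset.sum_congr rfl fun i _ => ?_
  rw [iteratedDeriv_comp_neg, neg_zero, smul_eq_mul]
  ring

end EulerOperator

section Theta

open Complex (I)

/-- The holomorphic extension `z ↦ ∑ⱼ exp (-z j²)` of `Θ` to the right half-plane, that is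
`jacobiTheta τ` at `τ = i z / π`. -/
noncomputable def complexTheta (z : ℂ) : ℂ := jacobiTheta (I * z / Real.pi)

lemma I_mul_div_pi_im (z : ℂ) : (I * z / Real.pi).im = z.re / Real.pi := by
  rw [Complex.div_ofReal_im, Complex.I_mul_im]

lemma I_mul_div_pi_im_pos {z : ℂ} (hz : 0 < z.re) : 0 < (I * z / Real.pi).im := by
  rw [I_mul_div_pi_im]
  exact div_pos hz Real.pi_pos

lemma differentiableAt_complexTheta {z : ℂ} (hz : 0 < z.re) : DifferentiableAt ℂ complexTheta z :=
  (differentiableAt_jacobiTheta (I_mul_div_pi_im_pos hz)).comp z (by fun_prop)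

lemma norm_complexTheta_sub_one_le {z : ℂ} (hz : 0 < z.re) :
    ‖complexTheta z - 1‖ ≤ 2 / (Real.exp z.re - 1) := by
  refine (norm_jacobiTheta_sub_one_le (I_mul_div_pi_im_pos hz)).trans_eq ?_
  have hexp : Real.exp z.re - 1 ≠ 0 := (sub_pos.2 (Real.one_lt_exp_iff.2 hz)).ne'
  rw [I_mul_div_pi_im, show -Real.pi * (z.re / Real.pi) = -z.re by field_simp, Real.exp_neg]
  field_simp

lemma hasSum_complexTheta {z : ℂ} (hz : 0 < z.re) :
    HasSum (fun j : ℤ => Complex.exp (-(z * (j : ℂ) ^ 2))) (complexTheta z) := by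
  have hsum := hasSum_jacobiTheta₂_term 0 (I_mul_div_pi_im_pos hz)
  rw [← jacobiTheta_eq_jacobiTheta₂] at hsum
  refine hsum.congr_fun fun j => ?_
  have hpi : (Real.pi : ℂ) ≠ 0 := Complex.ofReal_ne_zero.2 Real.pi_ne_zero
  rw [jacobiTheta₂_term]
  congr 1
  field_simp
  linear_combination (-(j : ℂ) ^ 2 * z) * Complex.I_sq

lemma Θ_eq_tsum_exp (t : ℝ) : Θ t = ∑' j : ℤ, Real.exp (-(t * (j : ℝ) ^ 2)) := by
  refine tsum_congr fun j => ?_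
  rw [← Real.exp_nat_mul, Nat.cast_pow, Nat.cast_natAbs, Int.cast_abs, sq_abs]
  ring_nf

lemma complexTheta_ofReal {t : ℝ} (ht : 0 < t) : complexTheta t = Θ t := by
  rw [Θ_eq_tsum_exp, Complex.ofReal_tsum, ← (hasSum_complexTheta (z := t) ht).tsum_eq]
  push_cast
  rfl

lemma hasSum_Θ {t : ℝ} (ht : 0 < t) :
    HasSum (fun j : ℤ => Real.exp (-(t * (j : ℝ) ^ 2))) (Θ t) := by
  rw [← Complex.hasSum_ofReal, ← complexTheta_ofReal ht]
  simpa using hasSum_complexTheta (z := t) ht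

lemma contDiffAt_Θ {t : ℝ} (ht : 0 < t) {n : WithTop ℕ∞} : ContDiffAt ℝ n Θ t :=
  contDiffAt_of_eq_ofReal (U := {z | 0 < z.re}) (isOpen_lt continuous_const Complex.continuous_re)
    (fun _ hz => (differentiableAt_complexTheta hz).differentiableWithinAt)
    (fun _ hx => complexTheta_ofReal hx) ht

/-- The quadratic form of the rectangular lattice of unit covolume and side ratio `e^ε`. -/
noncomputable def rectForm (ε : ℝ) (p : ℤ × ℤ) : ℝ :=
  (p.1 : ℝ) ^ 2 * Real.exp (-ε) + (p.2 : ℝ) ^ 2 * Real.exp ε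

/-- The theta function `∑ₚ exp (-t · rectForm ε p)` of the rectangular lattice, in its factorised
form. -/
noncomputable def thetaProduct (t ε : ℝ) : ℝ := Θ (t * Real.exp (-ε)) * Θ (t * Real.exp ε)

lemma hasSum_thetaProduct {t : ℝ} (ht : 0 < t) (ε : ℝ) :
    HasSum (fun p : ℤ × ℤ => Real.exp (-(t * rectForm ε p))) (thetaProduct t ε) := by
  have h₁ := hasSum_Θ (mul_pos ht (Real.exp_pos (-ε)))
  have h₂ := hasSum_Θ (mul_pos ht (Real.exp_pos ε))
  refine (h₁.mul h₂ (h₁.summable.mul_of_nonneg h₂.summable (fun _ => (Real.exp_pos _).le)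
    fun _ => (Real.exp_pos _).le)).congr_fun fun p => ?_
  rw [← Real.exp_add, rectForm]
  ring_nf

lemma iteratedDeriv_Θ_comp_mul_exp_zero {t : ℝ} (ht : 0 < t) (n : ℕ) :
    iteratedDeriv n (fun ε => Θ (t * Real.exp ε)) 0 =
      ∑ j ∈ Finset.range (n + 1), (Nat.stirlingSecond n j : ℝ) * (t ^ j * iteratedDeriv j Θ t) := by
  simpa using iteratedDeriv_comp_mul_exp
    (fun x => contDiffAt_Θ (mul_pos ht (Real.exp_pos x))) n 0

lemma iteratedDeriv_thetaProduct_zero {t : ℝ} (ht : 0 < t) (n : ℕ) :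
    iteratedDeriv n (thetaProduct t) 0 =
      ∑ i ∈ Finset.range (n + 1), (-1) ^ i * (n.choose i *
        iteratedDeriv i (fun ε => Θ (t * Real.exp ε)) 0 *
        iteratedDeriv (n - i) (fun ε => Θ (t * Real.exp ε)) 0) := by
  refine iteratedDeriv_neg_mul_self (g := fun ε => Θ (t * Real.exp ε)) ?_
  exact (contDiffAt_Θ (mul_pos ht (Real.exp_pos 0))).comp (g := Θ) 0
    (contDiffAt_const.mul Real.contDiff_exp.contDiffAt)

lemma iteratedDeriv_two_thetaProduct_zero {t : ℝ} (ht : 0 < t) :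
    iteratedDeriv 2 (thetaProduct t) 0 = 2 * Hfun t := by
  simp only [iteratedDeriv_thetaProduct_zero ht, iteratedDeriv_Θ_comp_mul_exp_zero ht,
    Finset.sum_range_succ, Finset.sum_range_zero, Nat.stirlingSecond, Nat.choose, Nat.reduceSub,
    iteratedDeriv_zero, iteratedDeriv_one, Hfun]
  push_cast
  ring

lemma iteratedDeriv_four_thetaProduct_zero {t : ℝ} (ht : 0 < t) :
    iteratedDeriv 4 (thetaProduct t) 0 = 2 * Kfun t := by
  simp only [iteratedDeriv_thetaProduct_zero ht, iteratedDeriv_Θ_comp_mul_exp_zero ht,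
    Finset.sum_range_succ, Finset.sum_range_zero, Nat.stirlingSecond, Nat.choose, Nat.reduceSub,
    iteratedDeriv_zero, iteratedDeriv_one, Kfun]
  push_cast
  ring

end Theta

section ComplexShear

lemma norm_mul_sub_one_le {R : Type*} [SeminormedRing R] {x y : R} {b : ℝ} (hx : ‖x - 1‖ ≤ b)
    (hy : ‖y - 1‖ ≤ b) : ‖x * y - 1‖ ≤ (1 + b) ^ 2 - 1 :=
  calc ‖x * y - 1‖ = ‖(x - 1) * (y - 1) + (x - 1) + (y - 1)‖ := by noncomm_ring
    _ ≤ ‖(x - 1) * (y - 1)‖ + ‖x - 1‖ + ‖y - 1‖ := norm_add₃_le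
    _ ≤ b * b + b + b := by
        have hb : 0 ≤ b := (norm_nonneg _).trans hx
        gcongr
        exact (norm_mul_le _ _).trans (by gcongr)
    _ = (1 + b) ^ 2 - 1 := by ring

lemma one_add_two_div_exp_sub_one_sq_sub_one {x : ℝ} (hx : x ≠ 0) :
    (1 + 2 / (Real.exp x - 1)) ^ 2 - 1 = 1 / Real.sinh (x / 2) ^ 2 := by
  have hexp : Real.exp x = Real.exp (x / 2) ^ 2 := by rw [← Real.exp_nat_mul]; ring_nf
  have hne : Real.exp (x / 2) ^ 2 - 1 ≠ 0 := by rwa [← hexp, sub_ne_zero, Ne, Real.exp_eq_one_iff]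
  rw [Real.sinh_eq, Real.exp_neg, hexp]
  field_simp
  ring

/-- The holomorphic extension of `thetaProduct t` to complex shears. -/
noncomputable def complexThetaProduct (t : ℝ) (z : ℂ) : ℂ :=
  complexTheta (t * Complex.exp (-z)) * complexTheta (t * Complex.exp z)

/-- The complex shears at which both factors of `complexThetaProduct t`, for `t > 0`, are evaluated
in the half-plane of convergence. -/
def shearDomain : Set ℂ := {z | 0 < (Complex.exp (-z)).re ∧ 0 < (Complex.exp z).re}

lemma isOpen_shearDomain : IsOpen shearDomain := by
  have hneg : Continuous fun z => (Complex.exp (-z)).re := by fun_prop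
  have hpos : Continuous fun z => (Complex.exp z).re := by fun_prop
  exact (isOpen_lt continuous_const hneg).inter (isOpen_lt continuous_const hpos)

lemma ofReal_mem_shearDomain (x : ℝ) : (x : ℂ) ∈ shearDomain := by
  constructor
  · rw [← Complex.ofReal_neg, Complex.exp_ofReal_re]
    exact Real.exp_pos _
  · rw [Complex.exp_ofReal_re]
    exact Real.exp_pos _

lemma re_ofReal_mul_pos {t : ℝ} (ht : 0 < t) {w : ℂ} (hw : 0 < w.re) : 0 < (t * w).re := by
  rw [Complex.re_ofReal_mul]
  exact mul_pos ht hw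

lemma complexThetaProduct_ofReal {t : ℝ} (ht : 0 < t) (ε : ℝ) :
    complexThetaProduct t ε = thetaProduct t ε := by
  rw [complexThetaProduct, thetaProduct, Complex.ofReal_mul,
    ← complexTheta_ofReal (mul_pos ht (Real.exp_pos (-ε))),
    ← complexTheta_ofReal (mul_pos ht (Real.exp_pos ε))]
  push_cast
  rfl

lemma differentiableOn_complexThetaProduct {t : ℝ} (ht : 0 < t) :
    DifferentiableOn ℂ (complexThetaProduct t) shearDomain := by
  intro z hz
  have hneg := (differentiableAt_complexTheta (re_ofReal_mul_pos ht hz.1)).comp z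
    (f := fun z => t * Complex.exp (-z)) (by fun_prop)
  have hpos := (differentiableAt_complexTheta (re_ofReal_mul_pos ht hz.2)).comp z
    (f := fun z => t * Complex.exp z) (by fun_prop)
  exact (hneg.mul hpos).differentiableWithinAt

lemma continuousOn_complexThetaProduct_left {z : ℂ} (hz : z ∈ shearDomain) :
    ContinuousOn (fun t => complexThetaProduct t z) (Ioi 0) := by
  intro t ht
  have hneg := (differentiableAt_complexTheta (re_ofReal_mul_pos ht hz.1)).continuousAt.comp
    (f := fun t : ℝ => t * Complex.exp (-z)) (by fun_prop)
  have hpos := (differentiableAt_complexTheta (re_ofReal_mul_pos ht hz.2)).continuousAt.comp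
    (f := fun t : ℝ => t * Complex.exp z) (by fun_prop)
  exact (hneg.mul hpos).continuousWithinAt

lemma norm_complexTheta_mul_sub_one_le {c t : ℝ} (hc : 0 < c) (ht : 0 < t) {w : ℂ} (hw : c ≤ w.re) :
    ‖complexTheta (t * w) - 1‖ ≤ 2 / (Real.exp (c * t) - 1) := by
  have hle : c * t ≤ (t * w).re := by
    rw [Complex.re_ofReal_mul, mul_comm]
    gcongr
  have hpos : 0 < Real.exp (c * t) - 1 := sub_pos.2 (Real.one_lt_exp_iff.2 (by positivity))
  refine (norm_complexTheta_sub_one_le ((mul_pos hc ht).trans_le hle)).trans ?_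
  gcongr

lemma norm_complexThetaProduct_sub_one_le {c t : ℝ} (hc : 0 < c) (ht : 0 < t) {z : ℂ}
    (hneg : c ≤ (Complex.exp (-z)).re) (hpos : c ≤ (Complex.exp z).re) :
    ‖complexThetaProduct t z - 1‖ ≤ 1 / Real.sinh (c * t / 2) ^ 2 := by
  rw [← one_add_two_div_exp_sub_one_sq_sub_one (mul_pos hc ht).ne']
  exact norm_mul_sub_one_le (norm_complexTheta_mul_sub_one_le hc ht hneg)
    (norm_complexTheta_mul_sub_one_le hc ht hpos)

lemma exists_pos_eventually_le_re_exp {z₀ : ℂ} (hz₀ : z₀ ∈ shearDomain) :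
    ∃ c > 0, ∀ᶠ z in 𝓝 z₀, c ≤ (Complex.exp (-z)).re ∧ c ≤ (Complex.exp z).re := by
  obtain ⟨c, hc, hlt⟩ := exists_between (lt_min hz₀.1 hz₀.2)
  have hneg : ContinuousAt (fun z => (Complex.exp (-z)).re) z₀ := by fun_prop
  have hpos : ContinuousAt (fun z => (Complex.exp z).re) z₀ := by fun_prop
  exact ⟨c, hc, ((hneg.eventually_const_lt (lt_min_iff.1 hlt).1).and
    (hpos.eventually_const_lt (lt_min_iff.1 hlt).2)).mono fun z hz => ⟨hz.1.le, hz.2.le⟩⟩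

lemma ae_mul_complexThetaProduct_sub_one_eq_ofReal (ρ : ℝ → ℝ) {A : ℝ} (hA : 0 < A) :
    ∀ᵐ s ∂volume.restrict (Ioi 0), ∀ ε : ℝ,
      (ρ s : ℂ) * (complexThetaProduct (A * s) ε - 1) =
        (ρ s * (thetaProduct (A * s) ε - 1) : ℝ) := by
  filter_upwards [ae_restrict_mem measurableSet_Ioi] with s hs ε
  rw [complexThetaProduct_ofReal (mul_pos hA hs)]
  push_cast
  rfl

end ComplexShear

section ThetaIntegrable

/-- Densities integrable against `1 / sinh² (c s) = coth² (c s) - 1` for every `c > 0`. This is the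
size of `thetaProduct - 1`, hence the condition under which Laplace transforms can be summed over
a lattice. -/
def IsThetaIntegrable (ρ : ℝ → ℝ) : Prop :=
  ∀ c > 0, IntegrableOn (fun s => ρ s / Real.sinh (c * s) ^ 2) (Ioi 0)

namespace IsThetaIntegrable

variable {ρ ρ₁ ρ₂ : ℝ → ℝ}

lemma const_mul (hρ : IsThetaIntegrable ρ) (a : ℝ) : IsThetaIntegrable fun s => a * ρ s :=
  fun c hc => ((hρ c hc).const_mul a).congr (ae_of_all _ fun _ => (mul_div_assoc _ _ _).symm)

lemma sub (hρ₁ : IsThetaIntegrable ρ₁) (hρ₂ : IsThetaIntegrable ρ₂) :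
    IsThetaIntegrable fun s => ρ₁ s - ρ₂ s :=
  fun c hc => ((hρ₁ c hc).sub (hρ₂ c hc)).congr (ae_of_all _ fun _ => (sub_div _ _ _).symm)

lemma aestronglyMeasurable (hρ : IsThetaIntegrable ρ) :
    AEStronglyMeasurable ρ (volume.restrict (Ioi 0)) := by
  have hsinh : AEStronglyMeasurable (fun s : ℝ => Real.sinh (1 * s) ^ 2)
      (volume.restrict (Ioi 0)) := by fun_prop
  refine ((hρ 1 one_pos).aestronglyMeasurable.mul hsinh).congr ?_
  filter_upwards [ae_restrict_mem measurableSet_Ioi] with s hs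
  rw [Pi.mul_apply, one_mul, div_mul_cancel₀ _ (pow_pos (Real.sinh_pos_iff.2 hs) 2).ne']

lemma integrableOn_exp_neg_mul (hρ : IsThetaIntegrable ρ) {b : ℝ} (hb : 0 < b) :
    IntegrableOn (fun s => Real.exp (-(s * b)) * ρ s) (Ioi 0) := by
  have hcont : Continuous fun s : ℝ => Real.exp (-(s * b)) := by fun_prop
  refine Integrable.mono (hρ (b / 2) (half_pos hb))
    (hcont.aestronglyMeasurable.mul hρ.aestronglyMeasurable) ?_
  filter_upwards [ae_restrict_mem measurableSet_Ioi] with s hs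
  have hsinh : 0 < Real.sinh (b / 2 * s) := Real.sinh_pos_iff.2 (mul_pos (half_pos hb) hs)
  have hle : Real.sinh (b / 2 * s) ≤ Real.exp (b / 2 * s) := by
    rw [← Real.cosh_add_sinh]
    linarith [Real.cosh_pos (b / 2 * s)]
  have hexp : Real.exp (-(s * b)) ≤ (Real.sinh (b / 2 * s) ^ 2)⁻¹ :=
    calc Real.exp (-(s * b)) = (Real.exp (b / 2 * s) ^ 2)⁻¹ := by
          rw [← Real.exp_nat_mul, ← Real.exp_neg]
          push_cast
          ring_nf
      _ ≤ (Real.sinh (b / 2 * s) ^ 2)⁻¹ := by gcongr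
  rw [mul_comm, norm_mul, div_eq_mul_inv, norm_mul, Real.norm_of_nonneg (Real.exp_pos _).le,
    Real.norm_of_nonneg (inv_nonneg.2 (sq_nonneg _))]
  gcongr

lemma isDominatedHolomorphicFamily (hρ : IsThetaIntegrable ρ) {A : ℝ} (hA : 0 < A) :
    IsDominatedHolomorphicFamily (volume.restrict (Ioi 0))
      (fun s z => (ρ s : ℂ) * (complexThetaProduct (A * s) z - 1)) shearDomain where
  aestronglyMeasurable z hz := by
    have hcont : ContinuousOn (fun s => complexThetaProduct (A * s) z) (Ioi 0) :=
      (continuousOn_complexThetaProduct_left hz).comp (by fun_prop) fun s hs => mul_pos hA hs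
    exact (Complex.continuous_ofReal.comp_aestronglyMeasurable hρ.aestronglyMeasurable).mul
      ((hcont.sub continuousOn_const).aestronglyMeasurable measurableSet_Ioi)
  differentiableOn := by
    filter_upwards [ae_restrict_mem measurableSet_Ioi] with s hs
    exact ((differentiableOn_complexThetaProduct (mul_pos hA hs)).sub_const 1).const_mul _
  exists_bound z₀ hz₀ := by
    obtain ⟨c, hc, hcz⟩ := exists_pos_eventually_le_re_exp hz₀
    refine ⟨_, hcz, _, (hρ (c * A / 2) (by positivity)).norm, ?_⟩
    filter_upwards [ae_restrict_mem measurableSet_Ioi] with s hs z hz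
    have hbound := norm_complexThetaProduct_sub_one_le hc (mul_pos hA hs) hz.1 hz.2
    rw [show c * (A * s) / 2 = c * A / 2 * s by ring] at hbound
    rw [norm_mul, Complex.norm_real, div_eq_mul_one_div, norm_mul]
    exact mul_le_mul_of_nonneg_left (hbound.trans (Real.le_norm_self _)) (norm_nonneg _)

lemma integrableOn_mul_thetaProduct_sub_one (hρ : IsThetaIntegrable ρ) {A : ℝ} (hA : 0 < A)
    (ε : ℝ) : IntegrableOn (fun s => ρ s * (thetaProduct (A * s) ε - 1)) (Ioi 0) := by
  have hint := (hρ.isDominatedHolomorphicFamily hA).integrable (ofReal_mem_shearDomain ε)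
  refine hint.re.congr ?_
  filter_upwards [ae_mul_complexThetaProduct_sub_one_eq_ofReal ρ hA] with s hs
  rw [hs, RCLike.re_eq_complex_re, Complex.ofReal_re]

lemma contDiff_integral (hρ : IsThetaIntegrable ρ) {A : ℝ} (hA : 0 < A) {n : WithTop ℕ∞} :
    ContDiff ℝ n fun ε => ∫ s in Ioi 0, ρ s * (thetaProduct (A * s) ε - 1) :=
  contDiff_integral_of_isDominatedHolomorphicFamily (hρ.isDominatedHolomorphicFamily hA)
    isOpen_shearDomain ofReal_mem_shearDomain (ae_mul_complexThetaProduct_sub_one_eq_ofReal ρ hA)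

lemma iteratedDeriv_integral (hρ : IsThetaIntegrable ρ) {A : ℝ} (hA : 0 < A) {n : ℕ} (hn : 0 < n)
    (ε : ℝ) :
    iteratedDeriv n (fun ε => ∫ s in Ioi 0, ρ s * (thetaProduct (A * s) ε - 1)) ε =
      ∫ s in Ioi 0, ρ s * iteratedDeriv n (thetaProduct (A * s)) ε := by
  rw [iteratedDeriv_integral_of_isDominatedHolomorphicFamily (hρ.isDominatedHolomorphicFamily hA)
    isOpen_shearDomain ofReal_mem_shearDomain (ae_mul_complexThetaProduct_sub_one_eq_ofReal ρ hA)]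
  congr with s
  simp only [iteratedDeriv_const_mul_field, sub_eq_neg_add, iteratedDeriv_const_add hn]

end IsThetaIntegrable

end ThetaIntegrable

section LatticeEnergy

/-- The energy per point of the rectangular lattice of covolume `A` and side ratio `e^ε` under the
radial pair potential `f`. -/
noncomputable def latticeEnergy (f : ℝ → ℝ) (A ε : ℝ) : ℝ :=
  (1 / 2) * ∑' p : {p : ℤ × ℤ // p ≠ 0}, f (√(A * rectForm ε p.1))

lemma rectForm_pos (ε : ℝ) {p : ℤ × ℤ} (hp : p ≠ 0) : 0 < rectForm ε p := by
  have hcoord : p.1 ≠ 0 ∨ p.2 ≠ 0 := by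
    by_contra! h
    exact hp (Prod.ext h.1 h.2)
  rw [rectForm]
  rcases hcoord with h | h
  · have : (p.1 : ℝ) ≠ 0 := Int.cast_ne_zero.2 h
    positivity
  · have : (p.2 : ℝ) ≠ 0 := Int.cast_ne_zero.2 h
    positivity

lemma rectForm_neg_swap (ε : ℝ) (p : ℤ × ℤ) : rectForm (-ε) p.swap = rectForm ε p := by
  simp only [rectForm, Prod.fst_swap, Prod.snd_swap, neg_neg, add_comm]

lemma latticeEnergy_neg (f : ℝ → ℝ) (A ε : ℝ) : latticeEnergy f A (-ε) = latticeEnergy f A ε := by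
  let swapNonzero : {p : ℤ × ℤ // p ≠ 0} ≃ {p : ℤ × ℤ // p ≠ 0} :=
    (Equiv.prodComm ℤ ℤ).subtypeEquiv fun _ => by
      rw [Equiv.prodComm_apply, not_iff_not, Prod.swap_eq_iff_eq_swap, Prod.swap_zero]
  rw [latticeEnergy, latticeEnergy, ← swapNonzero.tsum_eq]
  congr! 4 with p
  exact congrArg (fun x => √(A * x)) (rectForm_neg_swap ε p.1)

lemma hasSum_subtype_ne {β G : Type*} [AddCommGroup G] [TopologicalSpace G]
    [IsTopologicalAddGroup G] {f : β → G} {a : G} (hf : HasSum f a) (b : β) :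
    HasSum (fun x : {x // x ≠ b} => f x) (a - f b) :=
  ((hasSum_unique (f ∘ ((↑) : ({b} : Set β) → β))).hasSum_iff_compl).1 hf

lemma hasSum_thetaProduct_sub_one {t : ℝ} (ht : 0 < t) (ε : ℝ) :
    HasSum (fun p : {p : ℤ × ℤ // p ≠ 0} => Real.exp (-(t * rectForm ε p.1)))
      (thetaProduct t ε - 1) := by
  simpa [rectForm] using hasSum_subtype_ne (hasSum_thetaProduct ht ε) 0

variable {ρ f : ℝ → ℝ} {A : ℝ}

lemma hasSum_integral_exp_neg_mul_rectForm (hρ : IsThetaIntegrable ρ) (hA : 0 < A) (ε : ℝ) :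
    HasSum (fun p : {p : ℤ × ℤ // p ≠ 0} =>
        ∫ s in Ioi 0, Real.exp (-(s * (A * rectForm ε p.1))) * ρ s)
      (∫ s in Ioi 0, ρ s * (thetaProduct (A * s) ε - 1)) := by
  have hsum {s : ℝ} (hs : s ∈ Ioi 0) : HasSum (fun p : {p : ℤ × ℤ // p ≠ 0} =>
      Real.exp (-(s * (A * rectForm ε p.1)))) (thetaProduct (A * s) ε - 1) := by
    simpa only [mul_assoc, mul_left_comm] using hasSum_thetaProduct_sub_one (mul_pos hA hs) ε
  refine hasSum_integral_of_dominated_convergence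
    (fun p s => Real.exp (-(s * (A * rectForm ε p.1))) * ‖ρ s‖) (fun p => ?_) (fun p => ?_) ?_ ?_ ?_
  · exact (hρ.integrableOn_exp_neg_mul (mul_pos hA (rectForm_pos ε p.2))).aestronglyMeasurable
  · filter_upwards with s
    rw [norm_mul, Real.norm_of_nonneg (Real.exp_pos _).le]
  · filter_upwards [ae_restrict_mem measurableSet_Ioi] with s hs
      using (hsum hs).summable.mul_right _
  · refine (hρ.integrableOn_mul_thetaProduct_sub_one hA ε).norm.congr ?_
    filter_upwards [ae_restrict_mem measurableSet_Ioi] with s hs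
    rw [((hsum hs).mul_right _).tsum_eq, norm_mul, mul_comm,
      Real.norm_of_nonneg ((hsum hs).nonneg fun _ => (Real.exp_pos _).le)]
  · filter_upwards [ae_restrict_mem measurableSet_Ioi] with s hs
    simpa only [mul_comm (ρ s)] using (hsum hs).mul_right (ρ s)

lemma latticeEnergy_eq_integral (hρ : IsThetaIntegrable ρ)
    (hf : ∀ r > 0, ∫ s in Ioi 0, Real.exp (-(s * r ^ 2)) * ρ s = f r) (hA : 0 < A) :
    latticeEnergy f A =
      fun ε => (1 / 2) * ∫ s in Ioi 0, ρ s * (thetaProduct (A * s) ε - 1) := by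
  funext ε
  rw [latticeEnergy, ← (hasSum_integral_exp_neg_mul_rectForm hρ hA ε).tsum_eq]
  congr! 3 with p
  have hpos : 0 < A * rectForm ε p.1 := mul_pos hA (rectForm_pos ε p.2)
  rw [← hf _ (Real.sqrt_pos.2 hpos), Real.sq_sqrt hpos.le]

lemma contDiff_latticeEnergy (hρ : IsThetaIntegrable ρ)
    (hf : ∀ r > 0, ∫ s in Ioi 0, Real.exp (-(s * r ^ 2)) * ρ s = f r) (hA : 0 < A)
    {n : WithTop ℕ∞} : ContDiff ℝ n (latticeEnergy f A) := by
  rw [latticeEnergy_eq_integral hρ hf hA]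
  exact contDiff_const.mul (hρ.contDiff_integral hA)

lemma iteratedDeriv_latticeEnergy (hρ : IsThetaIntegrable ρ)
    (hf : ∀ r > 0, ∫ s in Ioi 0, Real.exp (-(s * r ^ 2)) * ρ s = f r) (hA : 0 < A)
    {n : ℕ} (hn : 0 < n) (ε : ℝ) :
    iteratedDeriv n (latticeEnergy f A) ε =
      ∫ s in Ioi 0, iteratedDeriv n (thetaProduct (A * s)) ε / 2 * ρ s := by
  rw [latticeEnergy_eq_integral hρ hf hA, iteratedDeriv_const_mul_field,
    hρ.iteratedDeriv_integral hA hn, ← integral_const_mul]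
  congr with s
  ring

lemma iteratedDeriv_two_latticeEnergy_zero (hρ : IsThetaIntegrable ρ)
    (hf : ∀ r > 0, ∫ s in Ioi 0, Real.exp (-(s * r ^ 2)) * ρ s = f r) (hA : 0 < A) :
    iteratedDeriv 2 (latticeEnergy f A) 0 = ∫ s in Ioi 0, Hfun (A * s) * ρ s := by
  rw [iteratedDeriv_latticeEnergy hρ hf hA two_pos]
  refine setIntegral_congr_fun measurableSet_Ioi fun s hs => ?_
  simp only [iteratedDeriv_two_thetaProduct_zero (mul_pos hA hs),
    mul_div_cancel_left₀ _ (two_ne_zero' ℝ)]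

lemma iteratedDeriv_four_latticeEnergy_zero (hρ : IsThetaIntegrable ρ)
    (hf : ∀ r > 0, ∫ s in Ioi 0, Real.exp (-(s * r ^ 2)) * ρ s = f r) (hA : 0 < A) :
    iteratedDeriv 4 (latticeEnergy f A) 0 = ∫ s in Ioi 0, Kfun (A * s) * ρ s := by
  rw [iteratedDeriv_latticeEnergy hρ hf hA four_pos]
  refine setIntegral_congr_fun measurableSet_Ioi fun s hs => ?_
  simp only [iteratedDeriv_four_thetaProduct_zero (mul_pos hA hs),
    mul_div_cancel_left₀ _ (two_ne_zero' ℝ)]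

end LatticeEnergy

section Yukawa

/-- The density whose Laplace transform at `r ^ 2` is the Yukawa potential `exp (-κ * r) / r`. -/
noncomputable def yukawaDensity (κ s : ℝ) : ℝ :=
  (Real.pi * s) ^ (-(1 : ℝ) / 2) * Real.exp (-κ ^ 2 / (4 * s))

lemma rpow_neg_half_eq_inv_sqrt {x : ℝ} (hx : 0 ≤ x) : x ^ (-(1 : ℝ) / 2) = (√x)⁻¹ := by
  rw [neg_div, Real.rpow_neg hx, Real.sqrt_eq_rpow]

lemma mul_exp_half_div_two_le_sinh {x : ℝ} (hx : 0 ≤ x) :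
    x * Real.exp (x / 2) / 2 ≤ Real.sinh x := by
  have hcosh : Real.exp (x / 2) / 2 ≤ Real.cosh (x / 2) := by
    rw [Real.cosh_eq]
    linarith [Real.exp_pos (-(x / 2))]
  calc x * Real.exp (x / 2) / 2 = 2 * (x / 2) * (Real.exp (x / 2) / 2) := by ring
    _ ≤ 2 * Real.sinh (x / 2) * Real.cosh (x / 2) := by
      gcongr
      exact Real.self_le_sinh_iff.2 (by positivity)
    _ = Real.sinh x := by rw [← Real.sinh_two_mul, mul_div_cancel₀ x (two_ne_zero' ℝ)]

lemma one_div_sinh_sq_le {x : ℝ} (hx : 0 < x) :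
    1 / Real.sinh x ^ 2 ≤ 4 * Real.exp (-x) / x ^ 2 :=
  calc 1 / Real.sinh x ^ 2 ≤ 1 / (x * Real.exp (x / 2) / 2) ^ 2 := by
        gcongr
        exact mul_exp_half_div_two_le_sinh hx.le
    _ = 4 * Real.exp (-x) / x ^ 2 := by
        rw [div_pow, mul_pow, ← Real.exp_nat_mul, Nat.cast_two, mul_div_cancel₀ x two_ne_zero,
          Real.exp_neg]
        field_simp
        norm_num

lemma exp_neg_le_two_div_sq {x : ℝ} (hx : 0 < x) : Real.exp (-x) ≤ 2 / x ^ 2 := by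
  have hexp : x ^ 2 / 2 ≤ Real.exp x := by linarith [Real.quadratic_le_exp_of_nonneg hx.le]
  calc Real.exp (-x) = (Real.exp x)⁻¹ := Real.exp_neg x
    _ ≤ (x ^ 2 / 2)⁻¹ := by gcongr
    _ = 2 / x ^ 2 := inv_div _ _

lemma yukawaDensity_nonneg (κ : ℝ) {s : ℝ} (hs : 0 ≤ s) : 0 ≤ yukawaDensity κ s := by
  rw [yukawaDensity]
  positivity

lemma yukawaDensity_le {κ s : ℝ} (hκ : κ ≠ 0) (hs : 0 < s) :
    yukawaDensity κ s ≤ 32 * Real.pi ^ (-(1 : ℝ) / 2) / κ ^ 4 * (s ^ (-(1 : ℝ) / 2) * s ^ 2) := by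
  have hexp : Real.exp (-κ ^ 2 / (4 * s)) ≤ 2 / (κ ^ 2 / (4 * s)) ^ 2 := by
    rw [neg_div]
    exact exp_neg_le_two_div_sq (by positivity)
  calc yukawaDensity κ s
      ≤ Real.pi ^ (-(1 : ℝ) / 2) * s ^ (-(1 : ℝ) / 2) * (2 / (κ ^ 2 / (4 * s)) ^ 2) := by
        rw [yukawaDensity, Real.mul_rpow Real.pi_pos.le hs.le]
        gcongr
    _ = 32 * Real.pi ^ (-(1 : ℝ) / 2) / κ ^ 4 * (s ^ (-(1 : ℝ) / 2) * s ^ 2) := by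
        field_simp
        norm_num

lemma isThetaIntegrable_yukawaDensity {κ : ℝ} (hκ : κ ≠ 0) :
    IsThetaIntegrable (yukawaDensity κ) := by
  intro c hc
  have hmajorant : IntegrableOn (fun s : ℝ => s ^ (-(1 : ℝ) / 2) * Real.exp (-c * s)) (Ioi 0) := by
    simpa only [Real.rpow_one] using
      integrableOn_rpow_mul_exp_neg_mul_rpow (by norm_num) one_pos hc
  have hmeas : Measurable fun s => yukawaDensity κ s / Real.sinh (c * s) ^ 2 := by
    unfold yukawaDensity
    fun_prop
  refine Integrable.mono' (hmajorant.const_mul (128 * Real.pi ^ (-(1 : ℝ) / 2) / (κ ^ 4 * c ^ 2)))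
    hmeas.aestronglyMeasurable ?_
  filter_upwards [ae_restrict_mem measurableSet_Ioi] with s (hs : 0 < s)
  rw [Real.norm_of_nonneg (div_nonneg (yukawaDensity_nonneg κ hs.le) (sq_nonneg _))]
  calc yukawaDensity κ s / Real.sinh (c * s) ^ 2
      = yukawaDensity κ s * (1 / Real.sinh (c * s) ^ 2) := div_eq_mul_one_div _ _
    _ ≤ 32 * Real.pi ^ (-(1 : ℝ) / 2) / κ ^ 4 * (s ^ (-(1 : ℝ) / 2) * s ^ 2) *
          (4 * Real.exp (-(c * s)) / (c * s) ^ 2) := by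
        exact mul_le_mul (yukawaDensity_le hκ hs) (one_div_sinh_sq_le (mul_pos hc hs))
          (by positivity) (by positivity)
    _ = _ := by
        rw [neg_mul]
        field_simp
        norm_num

/-- The primitive of `exp (-t ^ 2)` vanishing at `0`, that is, `√π / 2` times the error function. -/
noncomputable def gaussianPrimitive (x : ℝ) : ℝ := ∫ t in (0 : ℝ)..x, Real.exp (-t ^ 2)

lemma hasDerivAt_gaussianPrimitive (x : ℝ) :
    HasDerivAt gaussianPrimitive (Real.exp (-x ^ 2)) x := by
  have hcont : Continuous fun t : ℝ => Real.exp (-t ^ 2) := by fun_prop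
  exact hcont.integral_hasStrictDerivAt 0 x |>.hasDerivAt

lemma gaussianPrimitive_neg (x : ℝ) : gaussianPrimitive (-x) = -gaussianPrimitive x := by
  have h := intervalIntegral.integral_comp_neg (a := 0) (b := x) fun t : ℝ => Real.exp (-t ^ 2)
  simp only [neg_sq, neg_zero] at h
  rw [gaussianPrimitive, gaussianPrimitive, h, intervalIntegral.integral_symm]

lemma tendsto_gaussianPrimitive_atTop : Tendsto gaussianPrimitive atTop (𝓝 (√Real.pi / 2)) := by
  have hint : IntegrableOn (fun t : ℝ => Real.exp (-t ^ 2)) (Ioi 0) := by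
    simpa using (integrable_exp_neg_mul_sq one_pos).integrableOn
  have hval : ∫ t in Ioi (0 : ℝ), Real.exp (-t ^ 2) = √Real.pi / 2 := by
    simpa using integral_gaussian_Ioi 1
  exact hval ▸ intervalIntegral_tendsto_integral_Ioi 0 hint tendsto_id

lemma tendsto_gaussianPrimitive_atBot :
    Tendsto gaussianPrimitive atBot (𝓝 (-(√Real.pi / 2))) := by
  refine (tendsto_gaussianPrimitive_atTop.comp tendsto_neg_atBot_atTop).neg.congr fun x => ?_
  rw [Function.comp_apply, gaussianPrimitive_neg, neg_neg]

/-- Half of the primitive used to integrate `exp (-(s * r ^ 2)) * yukawaDensity κ s`: its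
derivatives for `κ` and `-κ` add up to a multiple of that integrand. -/
noncomputable def yukawaPrimitive (κ r s : ℝ) : ℝ :=
  Real.exp (κ * r) * gaussianPrimitive (r * √s + κ / 2 / √s)

lemma exp_mul_exp_neg_sq_sqrt (κ r : ℝ) {s : ℝ} (hs : 0 < s) :
    Real.exp (κ * r) * Real.exp (-(r * √s + κ / 2 / √s) ^ 2) =
      Real.exp (-(s * r ^ 2)) * Real.exp (-κ ^ 2 / (4 * s)) := by
  have hsqrt : √s ≠ 0 := (Real.sqrt_pos.2 hs).ne'
  have hsquare : (r * √s + κ / 2 / √s) ^ 2 = s * r ^ 2 + κ * r + κ ^ 2 / (4 * s) := by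
    rw [add_sq, mul_pow, div_pow, Real.sq_sqrt hs.le]
    field_simp
    ring
  rw [← Real.exp_add, ← Real.exp_add, hsquare]
  ring_nf

lemma hasDerivAt_yukawaPrimitive (κ r : ℝ) {s : ℝ} (hs : 0 < s) :
    HasDerivAt (yukawaPrimitive κ r)
      (Real.exp (-(s * r ^ 2)) * Real.exp (-κ ^ 2 / (4 * s)) *
        (r / (2 * √s) - κ / (4 * s * √s))) s := by
  have hsqrt : √s ≠ 0 := (Real.sqrt_pos.2 hs).ne'
  have harg : HasDerivAt (fun s => r * √s + κ / 2 / √s)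
      (r / (2 * √s) - κ / (4 * s * √s)) s := by
    have h := Real.hasDerivAt_sqrt hs.ne'
    refine ((h.const_mul r).add ((hasDerivAt_const s (κ / 2)).div h hsqrt)).congr_deriv ?_
    rw [Real.sq_sqrt hs.le]
    field_simp
    ring
  refine (((hasDerivAt_gaussianPrimitive _).comp s harg).const_mul
    (Real.exp (κ * r))).congr_deriv ?_
  rw [← mul_assoc, exp_mul_exp_neg_sq_sqrt κ r hs]

lemma hasDerivAt_yukawaPrimitive_add_neg (κ r : ℝ) {s : ℝ} (hs : 0 < s) :
    HasDerivAt (yukawaPrimitive κ r + yukawaPrimitive (-κ) r)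
      (√Real.pi * r * (Real.exp (-(s * r ^ 2)) * yukawaDensity κ s)) s := by
  refine ((hasDerivAt_yukawaPrimitive κ r hs).add
    (hasDerivAt_yukawaPrimitive (-κ) r hs)).congr_deriv ?_
  rw [yukawaDensity, rpow_neg_half_eq_inv_sqrt (by positivity), Real.sqrt_mul Real.pi_pos.le,
    neg_sq]
  field_simp
  ring

lemma tendsto_yukawaPrimitive_atTop (κ : ℝ) {r : ℝ} (hr : 0 < r) :
    Tendsto (yukawaPrimitive κ r) atTop (𝓝 (Real.exp (κ * r) * (√Real.pi / 2))) := by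
  have harg : Tendsto (fun s => r * √s + κ / 2 / √s) atTop atTop :=
    (Real.tendsto_sqrt_atTop.const_mul_atTop hr).atTop_add
      (Real.tendsto_sqrt_atTop.const_div_atTop _)
  exact (tendsto_gaussianPrimitive_atTop.comp harg).const_mul _

lemma tendsto_sqrt_nhdsGT_zero : Tendsto (√·) (𝓝[>] 0) (𝓝[>] 0) := by
  refine tendsto_nhdsWithin_iff.2 ⟨?_, ?_⟩
  · simpa using (Real.continuous_sqrt.tendsto 0).mono_left nhdsWithin_le_nhds
  · filter_upwards [self_mem_nhdsWithin] with s hs using Real.sqrt_pos.2 hs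

lemma tendsto_mul_sqrt_nhdsGT_zero (r : ℝ) : Tendsto (fun s => r * √s) (𝓝[>] 0) (𝓝 0) := by
  simpa using (tendsto_nhds_of_tendsto_nhdsWithin tendsto_sqrt_nhdsGT_zero).const_mul r

lemma tendsto_yukawaPrimitive_nhdsGT_zero_of_pos {κ : ℝ} (hκ : 0 < κ) (r : ℝ) :
    Tendsto (yukawaPrimitive κ r) (𝓝[>] 0) (𝓝 (Real.exp (κ * r) * (√Real.pi / 2))) := by
  have hdiv : Tendsto (fun s => κ / 2 / √s) (𝓝[>] 0) atTop :=
    (tendsto_inv_nhdsGT_zero.comp tendsto_sqrt_nhdsGT_zero).const_mul_atTop (half_pos hκ)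
  exact (tendsto_gaussianPrimitive_atTop.comp
    ((tendsto_mul_sqrt_nhdsGT_zero r).add_atTop hdiv)).const_mul _

lemma tendsto_yukawaPrimitive_nhdsGT_zero_of_neg {κ : ℝ} (hκ : κ < 0) (r : ℝ) :
    Tendsto (yukawaPrimitive κ r) (𝓝[>] 0) (𝓝 (Real.exp (κ * r) * -(√Real.pi / 2))) := by
  have hdiv : Tendsto (fun s => κ / 2 / √s) (𝓝[>] 0) atBot :=
    (tendsto_inv_nhdsGT_zero.comp tendsto_sqrt_nhdsGT_zero).const_mul_atTop_of_neg
      (div_neg_of_neg_of_pos hκ two_pos)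
  exact (tendsto_gaussianPrimitive_atBot.comp
    ((tendsto_mul_sqrt_nhdsGT_zero r).add_atBot hdiv)).const_mul _

lemma integral_Ioi_of_hasDerivAt_of_tendsto_nhdsGT {u u' : ℝ → ℝ} {a l m : ℝ}
    (hderiv : ∀ x ∈ Ioi a, HasDerivAt u (u' x) x) (hint : IntegrableOn u' (Ioi a))
    (ha : Tendsto u (𝓝[>] a) (𝓝 l)) (htop : Tendsto u atTop (𝓝 m)) :
    ∫ x in Ioi a, u' x = m - l := by
  simpa using integral_Ioi_deriv_mul_eq_sub (v := 1) (v' := 0) hderiv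
    (fun x _ => hasDerivAt_const x 1) (by simpa using hint) (by simpa using ha)
    (by simpa using htop)

lemma integral_exp_neg_mul_yukawaDensity {κ r : ℝ} (hκ : 0 < κ) (hr : 0 < r) :
    ∫ s in Ioi 0, Real.exp (-(s * r ^ 2)) * yukawaDensity κ s = Real.exp (-κ * r) / r := by
  have hint : IntegrableOn (fun s => Real.exp (-(s * r ^ 2)) * yukawaDensity κ s) (Ioi 0) :=
    (isThetaIntegrable_yukawaDensity hκ.ne').integrableOn_exp_neg_mul (by positivity)
  have hFTC := integral_Ioi_of_hasDerivAt_of_tendsto_nhdsGT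
    (fun s hs => hasDerivAt_yukawaPrimitive_add_neg κ r hs) (hint.const_mul (√Real.pi * r))
    ((tendsto_yukawaPrimitive_nhdsGT_zero_of_pos hκ r).add
      (tendsto_yukawaPrimitive_nhdsGT_zero_of_neg (neg_neg_of_pos hκ) r))
    ((tendsto_yukawaPrimitive_atTop κ hr).add (tendsto_yukawaPrimitive_atTop (-κ) hr))
  have hsqrt : √Real.pi ≠ 0 := (Real.sqrt_pos.2 Real.pi_pos).ne'
  rw [integral_const_mul] at hFTC
  rw [eq_div_iff hr.ne']
  refine mul_left_cancel₀ hsqrt ?_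
  linear_combination hFTC

end Yukawa

theorem double_yukawa_energy_eps_derivs_general (v₁ v₂ κ₁ κ₂ : ℝ) (hκ₁ : 0 < κ₁) (hκ₂ : 0 < κ₂)
    (A : ℝ) (hA : 0 < A) :
    let f : ℝ → ℝ := fun r => v₁ * Real.exp (-κ₁ * r) / r - v₂ * Real.exp (-κ₂ * r) / r
    let ρ : ℝ → ℝ := fun s =>
      (Real.pi * s) ^ (-(1 : ℝ) / 2) *
        (v₁ * Real.exp (-κ₁ ^ 2 / (4 * s)) - v₂ * Real.exp (-κ₂ ^ 2 / (4 * s)))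
    let F : ℝ → ℝ := fun ε =>
      (1 / 2) * ∑' p : {p : ℤ × ℤ // p ≠ 0},
        f (Real.sqrt (A * ((p.1.1 : ℝ) ^ 2 * Real.exp (-ε) +
          (p.1.2 : ℝ) ^ 2 * Real.exp ε)))
    ContDiff ℝ (⊤ : ℕ∞) F ∧ (∀ ε : ℝ, F (-ε) = F ε) ∧
      iteratedDeriv 2 F 0 = (∫ s in Set.Ioi (0 : ℝ), Hfun (A * s) * ρ s) ∧
      iteratedDeriv 4 F 0 = ∫ s in Set.Ioi (0 : ℝ), Kfun (A * s) * ρ s := by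
  intro f ρ F
  have hρ_eq : ρ = fun s => v₁ * yukawaDensity κ₁ s - v₂ * yukawaDensity κ₂ s := by
    funext s
    simp only [ρ, yukawaDensity]
    ring
  have hρ₁ := (isThetaIntegrable_yukawaDensity hκ₁.ne').const_mul v₁
  have hρ₂ := (isThetaIntegrable_yukawaDensity hκ₂.ne').const_mul v₂
  have hρ : IsThetaIntegrable ρ := hρ_eq ▸ hρ₁.sub hρ₂
  have hf : ∀ r > 0, ∫ s in Ioi 0, Real.exp (-(s * r ^ 2)) * ρ s = f r := by
    intro r hr
    have hr2 : 0 < r ^ 2 := pow_pos hr 2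
    simp only [hρ_eq, mul_sub]
    rw [integral_sub (hρ₁.integrableOn_exp_neg_mul hr2) (hρ₂.integrableOn_exp_neg_mul hr2)]
    simp only [mul_left_comm _ v₁, mul_left_comm _ v₂, integral_const_mul,
      integral_exp_neg_mul_yukawaDensity hκ₁ hr, integral_exp_neg_mul_yukawaDensity hκ₂ hr,
      f, mul_div_assoc]
  exact ⟨contDiff_latticeEnergy hρ hf hA, latticeEnergy_neg f A,
    iteratedDeriv_two_latticeEnergy_zero hρ hf hA, iteratedDeriv_four_latticeEnergy_zero hρ hf hA⟩

/-- Second and fourth `ε`-derivatives of the double Yukawa lattice energy: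
with `f` the double Yukawa potential, `ρ` its inverse Laplace density and
`F(ε) := (1/2)Σ_{(j,k)≠(0,0)} f(√(A(j²e^{−ε} + k²e^{ε}))) = E(A,e^ε)`,
the function `F` is smooth and even, `F''(0) = ∫₀^∞ H(As)ρ(s) ds` and
`F''''(0) = ∫₀^∞ K(As)ρ(s) ds`. -/
theorem double_yukawa_energy_eps_derivs (v₁ v₂ κ₁ κ₂ : ℝ)
    (hv₂ : 0 < v₂) (hv : v₂ < v₁) (hκ₂ : 0 < κ₂) (hκ : κ₂ < κ₁)
    (A : ℝ) (hA : 0 < A) :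
    let f : ℝ → ℝ := fun r => v₁ * Real.exp (-κ₁ * r) / r - v₂ * Real.exp (-κ₂ * r) / r
    let ρ : ℝ → ℝ := fun s =>
      (Real.pi * s) ^ (-(1 : ℝ) / 2) *
        (v₁ * Real.exp (-κ₁ ^ 2 / (4 * s)) - v₂ * Real.exp (-κ₂ ^ 2 / (4 * s)))
    let F : ℝ → ℝ := fun ε =>
      (1 / 2) * ∑' p : {p : ℤ × ℤ // p ≠ 0},
        f (Real.sqrt (A * ((p.1.1 : ℝ) ^ 2 * Real.exp (-ε) +
          (p.1.2 : ℝ) ^ 2 * Real.exp ε)))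
    ContDiff ℝ (⊤ : ℕ∞) F ∧ (∀ ε : ℝ, F (-ε) = F ε) ∧
      iteratedDeriv 2 F 0 = (∫ s in Set.Ioi (0 : ℝ), Hfun (A * s) * ρ s) ∧
      iteratedDeriv 4 F 0 = ∫ s in Set.Ioi (0 : ℝ), Kfun (A * s) * ρ s :=
  double_yukawa_energy_eps_derivs_general v₁ v₂ κ₁ κ₂ (hκ₂.trans hκ) hκ₂ A hA
end
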